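/- Consider the two-period time-dependent quantum walk on ℤ whose coin sequence is U_{2s} = H₀ and U_{2s+1} = H₁ (s = 0,1,2,...), where H₀ = [[a₀,b₀],[c₀,d₀]] and H₁ = [[a₁,b₁],[c₁,d₁]] are real orthogonal 2×2 matrices all of whose entries are nonzero. If det(H₁H₀) > 0, then X_t/t converges weakly as t → ∞ to a random variable Z whose law is absolutely continuous with density f(x) = f_K(x; a_ξ) · [1 − (|α|² − |β|² + ((α·conj(β) + conj(α)·β)·b₀)/a₀)·x], where |a_ξ| = min{|a₀|, |a₁|}. -/

import Mathlib

open MeasureTheory Complex Filter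

noncomputable section

/-- The Konno density function `f_K(x; a)`; only `|a|` matters. -/
def konnoDensity (a x : ℝ) : ℝ :=
  if |x| < |a| then
    Real.sqrt (1 - |a| ^ 2) / (Real.pi * (1 - x ^ 2) * Real.sqrt (|a| ^ 2 - x ^ 2))
  else 0

/-- Time evolution of a time-dependent discrete-time quantum walk on `ℤ`:
`ψ_{t+1}(x) = P_t ψ_t(x+1) + Q_t ψ_t(x-1)`, where `P_t`/`Q_t` are the top/bottom
row parts of the coin `U t`. -/
def QWEvolves (U : ℕ → Matrix (Fin 2) (Fin 2) ℂ) (ψ : ℕ → ℤ → Fin 2 → ℂ) : Prop :=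
  ∀ t : ℕ, ∀ x : ℤ,
    ψ (t + 1) x 0 = U t 0 0 * ψ t (x + 1) 0 + U t 0 1 * ψ t (x + 1) 1 ∧
    ψ (t + 1) x 1 = U t 1 0 * ψ t (x - 1) 0 + U t 1 1 * ψ t (x - 1) 1

/-- Initial state `ψ₀(0) = ᵀ(α, β)`, `ψ₀(x) = 0` for `x ≠ 0`. -/
def QWInit (α β : ℂ) (ψ : ℕ → ℤ → Fin 2 → ℂ) : Prop :=
  ψ 0 0 0 = α ∧ ψ 0 0 1 = β ∧ ∀ x : ℤ, x ≠ 0 → (ψ 0 x 0 = 0 ∧ ψ 0 x 1 = 0)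

/-- `P(X_t = x) = ‖ψ_t(x)‖²`. -/
def qwProb (ψ : ℕ → ℤ → Fin 2 → ℂ) (t : ℕ) (x : ℤ) : ℝ :=
  Complex.normSq (ψ t x 0) + Complex.normSq (ψ t x 1)

/-- The law of `X_t / t`: `μ_t = Σ_{x ∈ ℤ} P(X_t = x) δ_{x/t}`. -/
def qwMeasure (ψ : ℕ → ℤ → Fin 2 → ℂ) (t : ℕ) : Measure ℝ :=
  Measure.sum fun x : ℤ => ENNReal.ofReal (qwProb ψ t x) • Measure.dirac ((x : ℝ) / (t : ℝ))

/-- Weak convergence of `X_t / t` to the law with density `f`. -/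
def qwWeakLimit (ψ : ℕ → ℤ → Fin 2 → ℂ) (f : ℝ → ℝ) : Prop :=
  ∀ g : BoundedContinuousFunction ℝ ℝ,
    Tendsto (fun t : ℕ => ∫ y, g y ∂ qwMeasure ψ t) atTop (nhds (∫ y, g y * f y))

/-- `R(k) = diag(e^{ik}, e^{-ik})`. -/
def Rmat (k : ℝ) : Matrix (Fin 2) (Fin 2) ℂ :=
  !![Complex.exp (Complex.I * k), 0; 0, Complex.exp (-(Complex.I * k))]

/-- Angular parametrization `y ↦ m cos y / √(1 - m² sin² y)` of the support `(-m, m)` of the Konno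
density, under which that density becomes uniform on `(0, π)`. -/
def konnoParam (m y : ℝ) : ℝ :=
  m * Real.cos y / Real.sqrt (1 - m ^ 2 * Real.sin y ^ 2)

lemma one_sub_sq_mul_sin_sq_pos {m : ℝ} (h0 : 0 < m) (h1 : m < 1) (y : ℝ) :
    0 < 1 - m ^ 2 * Real.sin y ^ 2 := by
  have h2 : Real.sin y ^ 2 ≤ 1 := Real.sin_sq_le_one y
  nlinarith [mul_le_mul_of_nonneg_left h2 (sq_nonneg m)]

lemma continuous_konnoParam {m : ℝ} (h0 : 0 < m) (h1 : m < 1) : Continuous (konnoParam m) := by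
  unfold konnoParam
  refine Continuous.div (by fun_prop) (by fun_prop) fun y => ?_
  exact (Real.sqrt_pos.2 (one_sub_sq_mul_sin_sq_pos h0 h1 y)).ne'

lemma hasDerivAt_konnoParam {m : ℝ} (h0 : 0 < m) (h1 : m < 1) (y : ℝ) :
    HasDerivAt (konnoParam m)
      (-(m * Real.sin y * (1 - m ^ 2)) / Real.sqrt (1 - m ^ 2 * Real.sin y ^ 2) ^ 3) y := by
  have hD := one_sub_sq_mul_sin_sq_pos h0 h1 y
  have hs := Real.sqrt_pos.2 hD
  have h2 : HasDerivAt (fun y => 1 - m ^ 2 * Real.sin y ^ 2)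
      (-(m ^ 2 * (2 * Real.sin y * Real.cos y))) y := by
    have := (((Real.hasDerivAt_sin y).pow 2).const_mul (m ^ 2)).const_sub 1
    convert! this using 1
    simp
  have h3 := ((Real.hasDerivAt_cos y).const_mul m).div (h2.sqrt hD.ne') hs.ne'
  convert! h3 using 1
  have hsq := Real.sq_sqrt hD.le
  set q := Real.sqrt (1 - m ^ 2 * Real.sin y ^ 2)
  have hcs := Real.sin_sq_add_cos_sq y
  field_simp
  linear_combination Real.sin y * hsq - m ^ 2 * Real.sin y * hcs

lemma one_sub_konnoParam_sq {m : ℝ} (h0 : 0 < m) (h1 : m < 1) (y : ℝ) :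
    1 - konnoParam m y ^ 2 = (1 - m ^ 2) / (1 - m ^ 2 * Real.sin y ^ 2) := by
  have hD := one_sub_sq_mul_sin_sq_pos h0 h1 y
  rw [konnoParam, div_pow, Real.sq_sqrt hD.le]
  field_simp
  linear_combination (-m ^ 2) * Real.sin_sq_add_cos_sq y

lemma sq_sub_konnoParam_sq {m : ℝ} (h0 : 0 < m) (h1 : m < 1) (y : ℝ) :
    m ^ 2 - konnoParam m y ^ 2 =
      m ^ 2 * (1 - m ^ 2) * Real.sin y ^ 2 / (1 - m ^ 2 * Real.sin y ^ 2) := by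
  have hD := one_sub_sq_mul_sin_sq_pos h0 h1 y
  rw [konnoParam, div_pow, Real.sq_sqrt hD.le]
  field_simp
  linear_combination (-1) * Real.sin_sq_add_cos_sq y

lemma abs_konnoParam_lt {m : ℝ} (h0 : 0 < m) (h1 : m < 1) {y : ℝ} (hy : y ∈ Set.Ioo 0 Real.pi) :
    |konnoParam m y| < m := by
  have hD := one_sub_sq_mul_sin_sq_pos h0 h1 y
  have hs := Real.sin_pos_of_mem_Ioo hy
  have h2 : 0 < 1 - m ^ 2 := by nlinarith
  have : 0 < m ^ 2 - konnoParam m y ^ 2 := by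
    rw [sq_sub_konnoParam_sq h0 h1]; positivity
  exact abs_lt_of_sq_lt_sq (by linarith) h0.le

lemma abs_deriv_mul_konnoDensity_konnoParam {m : ℝ} (h0 : 0 < m) (h1 : m < 1) {y : ℝ}
    (hy : y ∈ Set.Ioo 0 Real.pi) :
    |-(m * Real.sin y * (1 - m ^ 2)) / Real.sqrt (1 - m ^ 2 * Real.sin y ^ 2) ^ 3| *
      konnoDensity m (konnoParam m y) = Real.pi⁻¹ := by
  have hD := one_sub_sq_mul_sin_sq_pos h0 h1 y
  have hq := Real.sqrt_pos.2 hD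
  have hs := Real.sin_pos_of_mem_Ioo hy
  have h2 : 0 < 1 - m ^ 2 := by nlinarith
  have hlt := abs_konnoParam_lt h0 h1 hy
  rw [konnoDensity, abs_of_pos h0, if_pos hlt, one_sub_konnoParam_sq h0 h1,
    sq_sub_konnoParam_sq h0 h1, neg_div, abs_neg, abs_of_pos (by positivity),
    Real.sqrt_div' _ hD.le, Real.sqrt_mul' _ (sq_nonneg _), Real.sqrt_mul' _ h2.le,
    Real.sqrt_sq h0.le, Real.sqrt_sq hs.le]
  have hsq := Real.sq_sqrt hD.le
  have hsq2 := Real.sq_sqrt h2.le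
  have hn := Real.sqrt_pos.2 h2
  set q := Real.sqrt (1 - m ^ 2 * Real.sin y ^ 2)
  set n := Real.sqrt (1 - m ^ 2)
  rw [← hsq, ← hsq2]
  have := Real.pi_pos
  field_simp

lemma strictAntiOn_konnoParam {m : ℝ} (h0 : 0 < m) (h1 : m < 1) :
    StrictAntiOn (konnoParam m) (Set.Icc 0 Real.pi) := by
  refine strictAntiOn_of_deriv_neg (convex_Icc _ _) (continuous_konnoParam h0 h1).continuousOn ?_
  intro y hy
  rw [interior_Icc] at hy
  rw [(hasDerivAt_konnoParam h0 h1 y).deriv]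
  have hs := Real.sin_pos_of_mem_Ioo hy
  have hq := Real.sqrt_pos.2 (one_sub_sq_mul_sin_sq_pos h0 h1 y)
  have h2 : 0 < 1 - m ^ 2 := by nlinarith
  rw [neg_div, neg_lt_zero]
  positivity

lemma konnoParam_image {m : ℝ} (h0 : 0 < m) (h1 : m < 1) :
    konnoParam m '' Set.Ioo 0 Real.pi = Set.Ioo (-m) m := by
  apply Set.Subset.antisymm
  · rintro _ ⟨y, hy, rfl⟩
    exact abs_lt.1 (abs_konnoParam_lt h0 h1 hy)
  · have h := intermediate_value_Ioo' Real.pi_pos.le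
      (continuous_konnoParam h0 h1).continuousOn (f := konnoParam m)
    simpa [konnoParam] using h

section
variable {E : Type*} [NormedAddCommGroup E] [NormedSpace ℝ E]

lemma konnoDensity_smul_eq_indicator {m : ℝ} (h0 : 0 < m) (g : ℝ → E) :
    (fun x => konnoDensity m x • g x) =
      (Set.Ioo (-m) m).indicator (fun x => konnoDensity m x • g x) := by
  funext x
  by_cases hx : x ∈ Set.Ioo (-m) m
  · rw [Set.indicator_of_mem hx]
  · rw [Set.indicator_of_notMem hx, konnoDensity, abs_of_pos h0, if_neg, zero_smul]
    exact fun h => hx (abs_lt.1 h)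

/-- Integrals against the Konno density, in the angular parametrization. -/
lemma integral_konnoDensity_smul {m : ℝ} (h0 : 0 < m) (h1 : m < 1) (g : ℝ → E) :
    ∫ x, konnoDensity m x • g x = Real.pi⁻¹ • ∫ y in (0 : ℝ)..Real.pi, g (konnoParam m y) := by
  rw [konnoDensity_smul_eq_indicator h0, integral_indicator measurableSet_Ioo,
    ← konnoParam_image h0 h1, integral_image_eq_integral_abs_deriv_smul measurableSet_Ioo
      (fun y _ => (hasDerivAt_konnoParam h0 h1 y).hasDerivWithinAt)
      ((strictAntiOn_konnoParam h0 h1).injOn.mono Set.Ioo_subset_Icc_self),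
    intervalIntegral.integral_of_le Real.pi_pos.le, integral_Ioc_eq_integral_Ioo, ← integral_smul]
  refine setIntegral_congr_fun measurableSet_Ioo fun y hy => ?_
  simp only [smul_smul, abs_deriv_mul_konnoDensity_konnoParam h0 h1 hy]

lemma integrable_konnoDensity_smul {m : ℝ} (h0 : 0 < m) (h1 : m < 1) {g : ℝ → E}
    (hg : Continuous g) : Integrable (fun x => konnoDensity m x • g x) := by
  rw [konnoDensity_smul_eq_indicator h0, integrable_indicator_iff measurableSet_Ioo,
    ← konnoParam_image h0 h1, integrableOn_image_iff_integrableOn_abs_deriv_smul measurableSet_Ioo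
      (fun y _ => (hasDerivAt_konnoParam h0 h1 y).hasDerivWithinAt)
      ((strictAntiOn_konnoParam h0 h1).injOn.mono Set.Ioo_subset_Icc_self)]
  have hc : Continuous fun y => Real.pi⁻¹ • g (konnoParam m y) :=
    (hg.comp (continuous_konnoParam h0 h1)).const_smul _
  refine ((hc.integrableOn_Icc (a := 0) (b := Real.pi)).mono_set
    Set.Ioo_subset_Icc_self).congr_fun (fun y hy => ?_) measurableSet_Ioo
  simp only [smul_smul, abs_deriv_mul_konnoDensity_konnoParam h0 h1 hy]

end

/-- Half of the derivative of the quasi-energy `arccos (p cos 2k - q)`, as a function of `φ = 2k`. -/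
def velocity (p q φ : ℝ) : ℝ :=
  p * Real.sin φ / Real.sqrt (1 - (p * Real.cos φ - q) ^ 2)

lemma abs_velocity_le_one {p q : ℝ} (h : |p| + |q| ≤ 1) (φ : ℝ) : |velocity p q φ| ≤ 1 := by
  rw [velocity, abs_div, abs_of_nonneg (Real.sqrt_nonneg _)]
  refine div_le_one_of_le₀ (Real.abs_le_sqrt ?_) (Real.sqrt_nonneg _)
  have h1 : -(p * q * Real.cos φ) ≤ |p| * |q| := by
    rw [← abs_mul]
    refine (neg_le_abs _).trans ?_
    rw [abs_mul]
    exact mul_le_of_le_one_right (abs_nonneg _) (Real.abs_cos_le_one φ)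
  have h1' : p * q * Real.cos φ ≤ |p| * |q| := by
    rw [← abs_mul]
    refine (le_abs_self _).trans ?_
    rw [abs_mul]
    exact mul_le_of_le_one_right (abs_nonneg _) (Real.abs_cos_le_one φ)
  have h2 : (|p| + |q|) ^ 2 ≤ 1 := pow_le_one₀ (by positivity) h
  have h3 : (p * Real.sin φ) ^ 2 = p ^ 2 - (p * Real.cos φ) ^ 2 := by
    linear_combination p ^ 2 * Real.sin_sq_add_cos_sq φ
  rw [h3]
  nlinarith [sq_abs p, sq_abs q]

lemma measurable_velocity (p q : ℝ) : Measurable (velocity p q) := by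
  unfold velocity
  fun_prop

lemma velocity_periodic (p q : ℝ) : Function.Periodic (velocity p q) (2 * Real.pi) := by
  intro φ
  simp [velocity]

lemma intervalIntegrable_of_measurable_of_norm_le {f : ℝ → ℂ} (hf : Measurable f) {C : ℝ}
    (hC : ∀ x, ‖f x‖ ≤ C) (a b : ℝ) : IntervalIntegrable f volume a b :=
  (intervalIntegrable_const (c := C)).mono_fun hf.aestronglyMeasurable
    (Eventually.of_forall fun x => (hC x).trans (le_abs_self C))

lemma intervalIntegrable_comp_velocity {p q : ℝ} (h : |p| + |q| ≤ 1) {F : ℝ → ℂ}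
    (hF : Continuous F) (a b : ℝ) :
    IntervalIntegrable (fun φ => F (velocity p q φ)) volume a b := by
  obtain ⟨C, hC⟩ := (isCompact_Icc (a := (-1 : ℝ)) (b := 1)).exists_bound_of_continuousOn
    hF.continuousOn
  exact intervalIntegrable_of_measurable_of_norm_le
    (hF.measurable.comp (measurable_velocity p q))
    (fun φ => hC _ (abs_le.1 (abs_velocity_le_one h φ))) a b

lemma even_apply_eq_of_sq_eq {F : ℝ → ℂ} (hF : ∀ x, F (-x) = F x) {x y : ℝ} (h : x ^ 2 = y ^ 2) :
    F x = F y := by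
  rcases sq_eq_sq_iff_eq_or_eq_neg.1 h with h | h <;> simp [h, hF]

lemma velocity_sq {p q : ℝ} (φ : ℝ) (h : 0 ≤ 1 - (p * Real.cos φ - q) ^ 2) :
    velocity p q φ ^ 2 = (p * Real.sin φ) ^ 2 / (1 - (p * Real.cos φ - q) ^ 2) := by
  rw [velocity, div_pow, Real.sq_sqrt h]

lemma konnoParam_sq {m : ℝ} (h0 : 0 < m) (h1 : m < 1) (y : ℝ) :
    konnoParam m y ^ 2 = (m * Real.cos y) ^ 2 / (1 - m ^ 2 * Real.sin y ^ 2) := by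
  rw [konnoParam, div_pow, Real.sq_sqrt (one_sub_sq_mul_sin_sq_pos h0 h1 y).le]

/-- The phase `p cos φ - q` with `p = mM`, `q = -√(1-m²)√(1-M²)` stays inside `(-1, 1)`
if `m < M`. -/
lemma one_sub_phase_sq_pos {m M n N : ℝ} (h0 : 0 < m) (hmM : m < M)
    (hn0 : 0 < n) (hN0 : 0 < N) (hn : n ^ 2 = 1 - m ^ 2) (hN : N ^ 2 = 1 - M ^ 2) (φ : ℝ) :
    0 < 1 - (m * M * Real.cos φ - -(n * N)) ^ 2 := by
  have hM0 : 0 < M := h0.trans hmM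
  have hlt : m * M + n * N < 1 := by
    have : 0 < (M - m) ^ 2 := by have := sub_pos.2 hmM; positivity
    nlinarith [sq_nonneg (n - N)]
  have hc1 := Real.cos_le_one φ
  have hc2 := Real.neg_one_le_cos φ
  have hmm : 0 < m * M := by positivity
  have hnn : 0 < n * N := by positivity
  have hup : m * M * Real.cos φ + n * N < 1 := by nlinarith
  have hlo : -1 < m * M * Real.cos φ + n * N := by nlinarith
  nlinarith

lemma velocity_shift_sq {m M n N : ℝ} (h0 : 0 < m) (h1 : m < 1) (hmM : m < M)
    (hn0 : 0 < n) (hN0 : 0 < N) (hn : n ^ 2 = 1 - m ^ 2) (hN : N ^ 2 = 1 - M ^ 2) {r : ℝ}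
    (hr : r * (n * M) = m * N) (hr1 : r ^ 2 < 1) (y : ℝ) :
    velocity (m * M) (-(n * N)) (y + Real.arccos (r * Real.cos y)) ^ 2 = konnoParam m y ^ 2 := by
  have hM0 : 0 < M := h0.trans hmM
  have hp := one_sub_phase_sq_pos h0 hmM hn0 hN0 hn hN (y + Real.arccos (r * Real.cos y))
  rw [velocity_sq _ hp.le, konnoParam_sq h0 h1]
  have hD := one_sub_sq_mul_sin_sq_pos h0 h1 y
  rw [div_eq_div_iff hp.ne' hD.ne']
  have hc2 : Real.cos y ^ 2 ≤ 1 := Real.cos_sq_le_one y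
  have hrc : (r * Real.cos y) ^ 2 ≤ 1 := by
    rw [mul_pow]; nlinarith [sq_nonneg r, sq_nonneg (Real.cos y)]
  have hab := abs_le.1 ((sq_le_one_iff_abs_le_one _).1 hrc)
  rw [Real.sin_add, Real.cos_add, Real.cos_arccos hab.1 hab.2, Real.sin_arccos]
  have hS := Real.sq_sqrt (sub_nonneg.2 hrc)
  set S := Real.sqrt (1 - (r * Real.cos y) ^ 2)
  have hcs := Real.sin_sq_add_cos_sq y
  set c := Real.cos y
  set s := Real.sin y
  have hsin : n * M * (s * (r * c) + c * S) = c * (s * (m * N) + n * M * S) := by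
    linear_combination s * c * hr
  have hcos : n * (m * M * (c * (r * c) - s * S) - -(n * N)) =
      N * (1 - m ^ 2 * s ^ 2) - m * (n * M * S) * s := by
    linear_combination m * c ^ 2 * hr + N * hn + m ^ 2 * N * hcs
  have hZ : (n * M * S) ^ 2 = n ^ 2 * M ^ 2 - m ^ 2 * N ^ 2 * c ^ 2 := by
    rw [mul_pow, hS]
    linear_combination (-(c ^ 2)) * (r * (n * M) + m * N) * hr
  generalize n * M * S = Z at *
  generalize s * (r * c) + c * S = A at *
  generalize m * M * (c * (r * c) - s * S) - -(n * N) = T at *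
  have key : (s * (m * N) + Z) ^ 2 * (1 - m ^ 2 * s ^ 2) =
      n ^ 2 - (N * (1 - m ^ 2 * s ^ 2) - m * Z * s) ^ 2 := by
    linear_combination hZ + n ^ 2 * hN - N ^ 2 * hn - m ^ 2 * N ^ 2 * hcs
  have hn2 : n ^ 2 ≠ 0 := by positivity
  refine mul_left_cancel₀ hn2 ?_
  calc n ^ 2 * ((m * M * A) ^ 2 * (1 - m ^ 2 * s ^ 2))
      = m ^ 2 * (n * M * A) ^ 2 * (1 - m ^ 2 * s ^ 2) := by ring
    _ = m ^ 2 * c ^ 2 * ((s * (m * N) + Z) ^ 2 * (1 - m ^ 2 * s ^ 2)) := by rw [hsin]; ring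
    _ = m ^ 2 * c ^ 2 * (n ^ 2 - (n * T) ^ 2) := by rw [key, hcos]
    _ = n ^ 2 * ((m * c) ^ 2 * (1 - T ^ 2)) := by ring

lemma konnoParam_two_pi_sub (m y : ℝ) : konnoParam m (2 * Real.pi - y) = konnoParam m y := by
  simp [konnoParam]

lemma integral_comp_konnoParam_two_pi {m : ℝ} (h0 : 0 < m) (h1 : m < 1) {F : ℝ → ℂ}
    (hF : Continuous F) :
    ∫ y in (0 : ℝ)..(2 * Real.pi), F (konnoParam m y) =
      2 * ∫ y in (0 : ℝ)..Real.pi, F (konnoParam m y) := by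
  have hc : Continuous fun y => F (konnoParam m y) := hF.comp (continuous_konnoParam h0 h1)
  rw [← intervalIntegral.integral_add_adjacent_intervals (hc.intervalIntegrable 0 Real.pi)
    (hc.intervalIntegrable _ _)]
  have := intervalIntegral.integral_comp_sub_left (fun y => F (konnoParam m y)) (2 * Real.pi)
    (a := 0) (b := Real.pi)
  simp only [konnoParam_two_pi_sub, sub_zero] at this
  rw [show 2 * Real.pi - Real.pi = Real.pi by ring] at this
  rw [← this]
  ring

lemma integral_comp_velocity_of_lt {m M n N : ℝ} (h0 : 0 < m) (h1 : m < 1) (hmM : m < M)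
    (hn0 : 0 < n) (hN0 : 0 < N) (hn : n ^ 2 = 1 - m ^ 2) (hN : N ^ 2 = 1 - M ^ 2)
    {F : ℝ → ℂ} (hF : Continuous F) (heven : ∀ x, F (-x) = F x) :
    ∫ φ in (0 : ℝ)..(2 * Real.pi), F (velocity (m * M) (-(n * N)) φ) =
      ∫ y in (0 : ℝ)..(2 * Real.pi), F (konnoParam m y) := by
  have hM0 : 0 < M := h0.trans hmM
  obtain ⟨r, hr, hr1⟩ : ∃ r, r * (n * M) = m * N ∧ r ^ 2 < 1 := by
    refine ⟨m * N / (n * M), div_mul_cancel₀ _ (by positivity), ?_⟩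
    rw [div_pow, div_lt_one (by positivity), mul_pow, mul_pow, hn, hN]
    nlinarith
  have hrc : ∀ y, (r * Real.cos y) ^ 2 < 1 := fun y => by
    rw [mul_pow]
    nlinarith [sq_nonneg r, Real.cos_sq_le_one y]
  have hpos : ∀ y, 0 < 1 - (r * Real.cos y) ^ 2 := fun y => sub_pos.2 (hrc y)
  set w : ℝ → ℝ := fun y => r * Real.sin y / Real.sqrt (1 - (r * Real.cos y) ^ 2) with hw
  have hwc : Continuous w :=
    Continuous.div (by fun_prop) (by fun_prop) fun y => (Real.sqrt_pos.2 (hpos y)).ne'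
  have hder : ∀ y, HasDerivAt (fun y => y + Real.arccos (r * Real.cos y)) (1 + w y) y := by
    intro y
    have hab := abs_lt.1 ((sq_lt_one_iff_abs_lt_one _).1 (hrc y))
    have h2 := (Real.hasDerivAt_arccos hab.1.ne' hab.2.ne).comp y
      ((Real.hasDerivAt_cos y).const_mul r)
    convert! (hasDerivAt_id y).add h2 using 1
    simp only [hw]
    ring
  have hvc : Continuous fun φ => F (velocity (m * M) (-(n * N)) φ) := by
    refine hF.comp (Continuous.div (by fun_prop) (by fun_prop) fun φ => ?_)
    exact (Real.sqrt_pos.2 (one_sub_phase_sq_pos h0 hmM hn0 hN0 hn hN φ)).ne'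
  have hcov := intervalIntegral.integral_deriv_smul_comp (a := 0) (b := 2 * Real.pi)
    (fun y _ => hder y) (by fun_prop) hvc
  have hper : Function.Periodic (fun φ => F (velocity (m * M) (-(n * N)) φ)) (2 * Real.pi) :=
    (velocity_periodic _ _).comp F
  have hshift := hper.intervalIntegral_add_eq 0 (Real.arccos r)
  simp only [zero_add, Real.cos_zero, mul_one, Real.cos_two_pi, Function.comp_def] at hcov hshift
  rw [hshift, add_comm, ← hcov]
  have hXc : Continuous fun y => F (konnoParam m y) := hF.comp (continuous_konnoParam h0 h1)
  have hint : ∀ y, (1 + w y) • F (velocity (m * M) (-(n * N)) (y + Real.arccos (r * Real.cos y))) =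
      F (konnoParam m y) + w y • F (konnoParam m y) := fun y => by
    rw [even_apply_eq_of_sq_eq heven (velocity_shift_sq h0 h1 hmM hn0 hN0 hn hN hr hr1 y),
      add_smul, one_smul]
  simp only [hint]
  have hwX : Continuous fun y => w y • F (konnoParam m y) := hwc.smul hXc
  rw [intervalIntegral.integral_add (hXc.intervalIntegrable _ _) (hwX.intervalIntegrable _ _)]
  have hodd := intervalIntegral.integral_comp_sub_left (fun y => w y • F (konnoParam m y))
    (2 * Real.pi) (a := 0) (b := 2 * Real.pi)
  have hwodd : ∀ y, w (2 * Real.pi - y) = -w y := fun y => by simp [hw, neg_div]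
  simp only [konnoParam_two_pi_sub, hwodd, sub_zero, sub_self, neg_smul,
    intervalIntegral.integral_neg] at hodd
  rw [self_eq_neg.1 hodd.symm, add_zero]

lemma integral_comp_velocity_of_eq {m n : ℝ} (h0 : 0 < m) (h1 : m < 1)
    (hn : n ^ 2 = 1 - m ^ 2) {F : ℝ → ℂ} (heven : ∀ x, F (-x) = F x) :
    ∫ φ in (0 : ℝ)..(2 * Real.pi), F (velocity (m * m) (-(n * n)) φ) =
      2 * ∫ y in (0 : ℝ)..Real.pi, F (konnoParam m y) := by
  have hscale := intervalIntegral.smul_integral_comp_mul_left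
    (fun φ => F (velocity (m * m) (-(n * n)) φ)) 2 (a := 0) (b := Real.pi)
  rw [mul_zero] at hscale
  rw [← hscale, intervalIntegral.integral_of_le Real.pi_pos.le,
    intervalIntegral.integral_of_le Real.pi_pos.le, integral_Ioc_eq_integral_Ioo,
    integral_Ioc_eq_integral_Ioo, setIntegral_congr_fun measurableSet_Ioo
      (g := fun y => F (konnoParam m y))]
  · simp
  · intro y hy
    apply even_apply_eq_of_sq_eq heven
    have hs := Real.sin_pos_of_mem_Ioo hy
    have hD := one_sub_sq_mul_sin_sq_pos h0 h1 y
    have hcs := Real.sin_sq_add_cos_sq y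
    have hT : m * m * Real.cos (2 * y) - -(n * n) = 1 - 2 * m ^ 2 * Real.sin y ^ 2 := by
      rw [Real.cos_two_mul]
      linear_combination hn + 2 * m ^ 2 * hcs
    have hTT : 1 - (m * m * Real.cos (2 * y) - -(n * n)) ^ 2 =
        4 * m ^ 2 * Real.sin y ^ 2 * (1 - m ^ 2 * Real.sin y ^ 2) := by
      rw [hT]; ring
    rw [velocity_sq _ (by rw [hTT]; positivity), konnoParam_sq h0 h1, hTT, Real.sin_two_mul]
    field_simp
    ring

lemma integral_comp_velocity_abs (p q : ℝ) {F : ℝ → ℂ} (heven : ∀ x, F (-x) = F x) :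
    ∫ φ in (0 : ℝ)..(2 * Real.pi), F (velocity p q φ) =
      ∫ φ in (0 : ℝ)..(2 * Real.pi), F (velocity |p| (-|q|) φ) := by
  have hneg : ∀ p q : ℝ, ∫ φ in (0 : ℝ)..(2 * Real.pi), F (velocity (-p) (-q) φ) =
      ∫ φ in (0 : ℝ)..(2 * Real.pi), F (velocity p q φ) := fun p q => by
    refine intervalIntegral.integral_congr fun φ _ => ?_
    rw [← heven (velocity p q φ)]
    congr 1
    simp only [velocity]
    rw [neg_mul, neg_div, neg_mul, ← neg_sub', neg_sq]
  have hflip : ∀ p q : ℝ, ∫ φ in (0 : ℝ)..(2 * Real.pi), F (velocity p (-q) φ) =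
      ∫ φ in (0 : ℝ)..(2 * Real.pi), F (velocity p q φ) := fun p q => by
    have hper : Function.Periodic (fun φ => F (velocity p q φ)) (2 * Real.pi) :=
      (velocity_periodic _ _).comp F
    have hrefl := intervalIntegral.integral_comp_sub_left (fun φ => F (velocity p q φ)) Real.pi
      (a := 0) (b := 2 * Real.pi)
    have hshift := hper.intervalIntegral_add_eq (-Real.pi) 0
    rw [show -Real.pi + 2 * Real.pi = Real.pi by ring, zero_add] at hshift
    rw [sub_zero, show Real.pi - 2 * Real.pi = -Real.pi by ring, hshift] at hrefl
    rw [← hrefl]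
    refine intervalIntegral.integral_congr fun φ _ => ?_
    simp only [velocity, Real.sin_pi_sub, Real.cos_pi_sub]
    rw [mul_neg, ← neg_sq (p * Real.cos φ - -q), neg_sub', neg_neg]
  rcases abs_choice p with hp | hp <;> rcases abs_choice q with hq | hq <;>
    simp only [hp, hq, hneg, hflip]

/-- Averages of an even function of the velocity over a period, for real coins with
`|a₀|, |a₁|` equal to `m ≤ M` in some order. -/
lemma integral_comp_velocity {m M p q : ℝ} (h0 : 0 < m) (hmM : m ≤ M) (hM1 : M < 1)
    (hp : |p| = m * M) (hq : |q| = Real.sqrt (1 - m ^ 2) * Real.sqrt (1 - M ^ 2))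
    {F : ℝ → ℂ} (hF : Continuous F) (heven : ∀ x, F (-x) = F x) :
    ∫ φ in (0 : ℝ)..(2 * Real.pi), F (velocity p q φ) =
      2 * ∫ y in (0 : ℝ)..Real.pi, F (konnoParam m y) := by
  have h1 : m < 1 := hmM.trans_lt hM1
  have hm2 : 0 < 1 - m ^ 2 := by nlinarith
  have hM2 : 0 < 1 - M ^ 2 := by nlinarith
  rw [integral_comp_velocity_abs p q heven, hp, hq]
  rcases hmM.eq_or_lt with rfl | hlt
  · exact integral_comp_velocity_of_eq h0 h1 (Real.sq_sqrt hm2.le) heven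
  · rw [integral_comp_velocity_of_lt h0 h1 hlt (Real.sqrt_pos.2 hm2) (Real.sqrt_pos.2 hM2)
      (Real.sq_sqrt hm2.le) (Real.sq_sqrt hM2.le) hF heven,
      integral_comp_konnoParam_two_pi h0 h1 hF]

/-- Doubling the argument of a periodic integrand does not change its integral over a period. -/
lemma integral_comp_two_mul_of_periodic {f : ℝ → ℂ} (hper : Function.Periodic f (2 * Real.pi))
    (hf : ∀ a b, IntervalIntegrable f volume a b) :
    ∫ k in (0 : ℝ)..(2 * Real.pi), f (2 * k) = ∫ φ in (0 : ℝ)..(2 * Real.pi), f φ := by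
  have h1 := intervalIntegral.smul_integral_comp_mul_left f 2 (a := 0) (b := 2 * Real.pi)
  have h2 := hper.intervalIntegral_add_zsmul_eq 2 0 hf
  simp only [zero_add, mul_zero, zsmul_eq_mul, Int.cast_ofNat] at h1 h2
  rw [h2, real_smul, ofReal_ofNat] at h1
  exact mul_left_cancel₀ two_ne_zero h1

/-- Spatial Fourier transform of the amplitude at time `t`. -/
def qwFourier (ψ : ℕ → ℤ → Fin 2 → ℂ) (t : ℕ) (i : Fin 2) (k : ℝ) : ℂ :=
  ∑' x : ℤ, exp (-(I * k * x)) * ψ t x i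

lemma QWEvolves.eq_zero_of_lt {U : ℕ → Matrix (Fin 2) (Fin 2) ℂ} {α β : ℂ}
    {ψ : ℕ → ℤ → Fin 2 → ℂ} (hevol : QWEvolves U ψ) (hinit : QWInit α β ψ) (t : ℕ) :
    ∀ x : ℤ, (t : ℤ) < |x| → ∀ i, ψ t x i = 0 := by
  induction t with
  | zero =>
    intro x hx i
    have := hinit.2.2 x (abs_pos.1 (by simpa using hx))
    fin_cases i
    exacts [this.1, this.2]
  | succ t ih =>
    intro x hx i
    push_cast at hx
    have hp : (t : ℤ) < |x + 1| := by
      rw [lt_abs] at hx ⊢; omega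
    have hm : (t : ℤ) < |x - 1| := by
      rw [lt_abs] at hx ⊢; omega
    fin_cases i
    · simp [(hevol t x).1, ih _ hp]
    · simp [(hevol t x).2, ih _ hm]

lemma QWEvolves.eq_zero_of_notMem {U : ℕ → Matrix (Fin 2) (Fin 2) ℂ} {α β : ℂ}
    {ψ : ℕ → ℤ → Fin 2 → ℂ} (hevol : QWEvolves U ψ) (hinit : QWInit α β ψ) (t : ℕ) {x : ℤ}
    (hx : x ∉ Finset.Icc (-(t : ℤ)) t) (i : Fin 2) : ψ t x i = 0 := by
  refine hevol.eq_zero_of_lt hinit t x ?_ i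
  rw [Finset.mem_Icc] at hx
  rw [lt_abs]
  omega

lemma QWEvolves.qwFourier_eq_sum {U : ℕ → Matrix (Fin 2) (Fin 2) ℂ} {α β : ℂ}
    {ψ : ℕ → ℤ → Fin 2 → ℂ} (hevol : QWEvolves U ψ) (hinit : QWInit α β ψ) (t : ℕ) (i : Fin 2)
    (k : ℝ) :
    qwFourier ψ t i k = ∑ x ∈ Finset.Icc (-(t : ℤ)) t, exp (-(I * k * x)) * ψ t x i :=
  tsum_eq_sum fun x hx => by rw [hevol.eq_zero_of_notMem hinit t hx, mul_zero]

lemma QWEvolves.summable_fourier {U : ℕ → Matrix (Fin 2) (Fin 2) ℂ} {α β : ℂ}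
    {ψ : ℕ → ℤ → Fin 2 → ℂ} (hevol : QWEvolves U ψ) (hinit : QWInit α β ψ) (t : ℕ) (i : Fin 2)
    (k : ℝ) : Summable fun x : ℤ => exp (-(I * k * x)) * ψ t x i :=
  summable_of_ne_finset_zero (s := Finset.Icc (-(t : ℤ)) t) fun x hx => by
    rw [hevol.eq_zero_of_notMem hinit t hx, mul_zero]

lemma qwFourier_zero_zero {α β : ℂ} {ψ : ℕ → ℤ → Fin 2 → ℂ} (hinit : QWInit α β ψ) (k : ℝ) :
    qwFourier ψ 0 0 k = α := by
  rw [qwFourier, tsum_eq_single 0 fun x hx => by simp [(hinit.2.2 x hx).1]]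
  simp [hinit.1]

lemma qwFourier_zero_one {α β : ℂ} {ψ : ℕ → ℤ → Fin 2 → ℂ} (hinit : QWInit α β ψ) (k : ℝ) :
    qwFourier ψ 0 1 k = β := by
  rw [qwFourier, tsum_eq_single 0 fun x hx => by simp [(hinit.2.2 x hx).2]]
  simp [hinit.2.1]

lemma QWEvolves.qwFourier_succ_zero {U : ℕ → Matrix (Fin 2) (Fin 2) ℂ} {α β : ℂ}
    {ψ : ℕ → ℤ → Fin 2 → ℂ} (hevol : QWEvolves U ψ) (hinit : QWInit α β ψ) (t : ℕ) (k : ℝ) :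
    qwFourier ψ (t + 1) 0 k =
      exp (I * k) * (U t 0 0 * qwFourier ψ t 0 k + U t 0 1 * qwFourier ψ t 1 k) := by
  have h0 := (hevol.summable_fourier hinit t 0 k).hasSum.mul_left (U t 0 0)
  have h1 := (hevol.summable_fourier hinit t 1 k).hasSum.mul_left (U t 0 1)
  have h := (h0.add h1).mul_left (exp (I * k))
  rw [← (Equiv.addRight (1 : ℤ)).hasSum_iff] at h
  refine (tsum_congr fun x => ?_).trans h.tsum_eq
  simp only [Function.comp_apply, Equiv.coe_addRight, (hevol t x).1]
  have he : exp (-(I * k * x)) = exp (I * k) * exp (-(I * k * ((x + 1 : ℤ) : ℂ))) := by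
    rw [← Complex.exp_add]; congr 1; push_cast; ring
  rw [he]; ring

lemma QWEvolves.qwFourier_succ_one {U : ℕ → Matrix (Fin 2) (Fin 2) ℂ} {α β : ℂ}
    {ψ : ℕ → ℤ → Fin 2 → ℂ} (hevol : QWEvolves U ψ) (hinit : QWInit α β ψ) (t : ℕ) (k : ℝ) :
    qwFourier ψ (t + 1) 1 k =
      exp (-(I * k)) * (U t 1 0 * qwFourier ψ t 0 k + U t 1 1 * qwFourier ψ t 1 k) := by
  have h0 := (hevol.summable_fourier hinit t 0 k).hasSum.mul_left (U t 1 0)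
  have h1 := (hevol.summable_fourier hinit t 1 k).hasSum.mul_left (U t 1 1)
  have h := (h0.add h1).mul_left (exp (-(I * k)))
  rw [← (Equiv.subRight (1 : ℤ)).hasSum_iff] at h
  refine (tsum_congr fun x => ?_).trans h.tsum_eq
  simp only [Function.comp_apply, Equiv.subRight_apply, (hevol t x).2]
  have he : exp (-(I * k * x)) = exp (-(I * k)) * exp (-(I * k * ((x - 1 : ℤ) : ℂ))) := by
    rw [← Complex.exp_add]; congr 1; push_cast; ring
  rw [he]; ring

/-- The inner product of the Fourier amplitudes at `k` and `k - ε`. -/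
def qwOverlap (ψ : ℕ → ℤ → Fin 2 → ℂ) (t : ℕ) (ε k : ℝ) : ℂ :=
  starRingEnd ℂ (qwFourier ψ t 0 k) * qwFourier ψ t 0 (k - ε) +
    starRingEnd ℂ (qwFourier ψ t 1 k) * qwFourier ψ t 1 (k - ε)

lemma integral_exp_I_mul_int (n : ℤ) :
    ∫ k in (0 : ℝ)..(2 * Real.pi), exp (I * n * k) = if n = 0 then 2 * (Real.pi : ℂ) else 0 := by
  split_ifs with h
  · simp [h]
  · have hn : I * (n : ℂ) ≠ 0 := mul_ne_zero I_ne_zero (Int.cast_ne_zero.2 h)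
    rw [integral_exp_mul_complex hn]
    have : I * (n : ℂ) * ((2 * Real.pi : ℝ) : ℂ) = n * (2 * Real.pi * I) := by push_cast; ring
    rw [this, Complex.exp_int_mul_two_pi_mul_I]
    simp

/-- Parseval's identity with a shift in momentum, for finite sums. -/
lemma integral_conj_sum_mul_sum_shift (s : Finset ℤ) (f : ℤ → ℂ) (ε : ℝ) :
    ∫ k in (0 : ℝ)..(2 * Real.pi), starRingEnd ℂ (∑ x ∈ s, exp (-(I * k * x)) * f x) *
        (∑ y ∈ s, exp (-(I * ((k - ε : ℝ) : ℂ) * y)) * f y) =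
      2 * Real.pi * ∑ x ∈ s, exp (I * ε * x) * normSq (f x) := by
  have hexp : ∀ k : ℝ, starRingEnd ℂ (∑ x ∈ s, exp (-(I * k * x)) * f x) *
        (∑ y ∈ s, exp (-(I * ((k - ε : ℝ) : ℂ) * y)) * f y) =
      ∑ x ∈ s, ∑ y ∈ s, (starRingEnd ℂ (f x) * f y * exp (I * ε * y)) *
        exp (I * ((x - y : ℤ) : ℂ) * k) := fun k => by
    rw [map_sum, Finset.sum_mul_sum]
    refine Finset.sum_congr rfl fun x _ => Finset.sum_congr rfl fun y _ => ?_
    rw [map_mul, ← Complex.exp_conj]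
    have he : exp (I * ε * y) * exp (I * ((x - y : ℤ) : ℂ) * k) =
        exp (starRingEnd ℂ (-(I * k * x))) * exp (-(I * ((k - ε : ℝ) : ℂ) * y)) := by
      rw [← Complex.exp_add, ← Complex.exp_add]
      congr 1
      simp only [map_neg, map_mul, conj_I, conj_ofReal, map_intCast]
      push_cast
      ring
    linear_combination (-(starRingEnd ℂ (f x) * f y)) * he
  simp only [hexp]
  rw [intervalIntegral.integral_finsetSum fun x _ =>
    Continuous.intervalIntegrable (by fun_prop) _ _, Finset.mul_sum]
  refine Finset.sum_congr rfl fun x hx => ?_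
  rw [intervalIntegral.integral_finsetSum fun y _ =>
    Continuous.intervalIntegrable (by fun_prop) _ _]
  simp only [intervalIntegral.integral_const_mul, integral_exp_I_mul_int]
  rw [Finset.sum_eq_single x (fun y _ hy => by rw [if_neg (sub_ne_zero.2 hy.symm), mul_zero])
    (fun h => absurd hx h), sub_self, if_pos rfl, normSq_eq_conj_mul_self]
  ring

lemma QWEvolves.continuous_qwFourier {U : ℕ → Matrix (Fin 2) (Fin 2) ℂ} {α β : ℂ}
    {ψ : ℕ → ℤ → Fin 2 → ℂ} (hevol : QWEvolves U ψ) (hinit : QWInit α β ψ) (t : ℕ) (i : Fin 2) :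
    Continuous (qwFourier ψ t i) := by
  simp only [funext (hevol.qwFourier_eq_sum hinit t i)]
  fun_prop

lemma QWEvolves.continuous_qwOverlap {U : ℕ → Matrix (Fin 2) (Fin 2) ℂ} {α β : ℂ}
    {ψ : ℕ → ℤ → Fin 2 → ℂ} (hevol : QWEvolves U ψ) (hinit : QWInit α β ψ) (t : ℕ) (ε : ℝ) :
    Continuous (qwOverlap ψ t ε) := by
  have h0 := hevol.continuous_qwFourier hinit t 0
  have h1 := hevol.continuous_qwFourier hinit t 1
  unfold qwOverlap
  fun_prop

lemma QWEvolves.integral_qwOverlap {U : ℕ → Matrix (Fin 2) (Fin 2) ℂ} {α β : ℂ}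
    {ψ : ℕ → ℤ → Fin 2 → ℂ} (hevol : QWEvolves U ψ) (hinit : QWInit α β ψ) (t : ℕ) (ε : ℝ) :
    ∫ k in (0 : ℝ)..(2 * Real.pi), qwOverlap ψ t ε k =
      2 * Real.pi * ∑ x ∈ Finset.Icc (-(t : ℤ)) t, exp (I * ε * x) * qwProb ψ t x := by
  have h0 := hevol.continuous_qwFourier hinit t 0
  have h1 := hevol.continuous_qwFourier hinit t 1
  unfold qwOverlap
  rw [intervalIntegral.integral_add (Continuous.intervalIntegrable (by fun_prop) _ _)
    (Continuous.intervalIntegrable (by fun_prop) _ _)]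
  simp only [hevol.qwFourier_eq_sum hinit, integral_conj_sum_mul_sum_shift]
  rw [← mul_add, ← Finset.sum_add_distrib]
  simp only [qwProb, ofReal_add, mul_add]

lemma qwProb_nonneg (ψ : ℕ → ℤ → Fin 2 → ℂ) (t : ℕ) (x : ℤ) : 0 ≤ qwProb ψ t x :=
  add_nonneg (normSq_nonneg _) (normSq_nonneg _)

lemma QWEvolves.qwProb_eq_zero {U : ℕ → Matrix (Fin 2) (Fin 2) ℂ} {α β : ℂ}
    {ψ : ℕ → ℤ → Fin 2 → ℂ} (hevol : QWEvolves U ψ) (hinit : QWInit α β ψ) (t : ℕ) {x : ℤ}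
    (hx : x ∉ Finset.Icc (-(t : ℤ)) t) : qwProb ψ t x = 0 := by
  simp [qwProb, hevol.eq_zero_of_notMem hinit t hx]

/-- The characteristic function of `X_t / t` as an average of overlaps. -/
lemma QWEvolves.charFun_qwMeasure {U : ℕ → Matrix (Fin 2) (Fin 2) ℂ} {α β : ℂ}
    {ψ : ℕ → ℤ → Fin 2 → ℂ} (hevol : QWEvolves U ψ) (hinit : QWInit α β ψ) (t : ℕ) (ξ : ℝ) :
    charFun (qwMeasure ψ t) ξ =
      (2 * Real.pi : ℂ)⁻¹ * ∫ k in (0 : ℝ)..(2 * Real.pi), qwOverlap ψ t (ξ / t) k := by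
  have hpi : (2 * Real.pi : ℂ) ≠ 0 := by simp [Real.pi_ne_zero]
  rw [hevol.integral_qwOverlap hinit, inv_mul_cancel_left₀ hpi, charFun_apply_real, qwMeasure,
    integral_sum_dirac_eq_tsum (fun _ => ENNReal.ofReal_ne_top)]
  · rw [tsum_eq_sum (s := Finset.Icc (-(t : ℤ)) t) fun x hx => by
      simp [hevol.qwProb_eq_zero hinit t hx]]
    refine Finset.sum_congr rfl fun x _ => ?_
    rw [ENNReal.toReal_ofReal (qwProb_nonneg ψ t x), real_smul, mul_comm]
    congr 2
    push_cast
    ring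
  · refine summable_of_ne_finset_zero (s := Finset.Icc (-(t : ℤ)) t) fun x hx => ?_
    simp [hevol.qwProb_eq_zero hinit t hx]

lemma QWEvolves.isProbabilityMeasure_qwMeasure {U : ℕ → Matrix (Fin 2) (Fin 2) ℂ} {α β : ℂ}
    {ψ : ℕ → ℤ → Fin 2 → ℂ} (hevol : QWEvolves U ψ) (hinit : QWInit α β ψ) (t : ℕ)
    (hnorm : ∀ k, normSq (qwFourier ψ t 0 k) + normSq (qwFourier ψ t 1 k) = 1) :
    IsProbabilityMeasure (qwMeasure ψ t) := by
  have hpi : (2 * Real.pi : ℂ) ≠ 0 := by simp [Real.pi_ne_zero]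
  have hone : ∀ k, qwOverlap ψ t 0 k = 1 := fun k => by
    rw [qwOverlap, sub_zero, ← normSq_eq_conj_mul_self, ← normSq_eq_conj_mul_self, ← ofReal_add,
      hnorm, ofReal_one]
  have h := hevol.integral_qwOverlap hinit t 0
  simp only [hone, intervalIntegral.integral_const, sub_zero, real_smul, mul_one, ofReal_zero,
    mul_zero, zero_mul, Complex.exp_zero, one_mul] at h
  push_cast at h
  have hsum : ∑ x ∈ Finset.Icc (-(t : ℤ)) t, qwProb ψ t x = 1 := by
    have := mul_left_cancel₀ hpi ((mul_one _).trans h)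
    exact_mod_cast this.symm
  have hs : HasSum (qwProb ψ t) 1 := hsum ▸ hasSum_sum_of_ne_finset_zero
    fun x hx => hevol.qwProb_eq_zero hinit t hx
  exact hs.isProbabilityMeasure_sum_dirac (qwProb_nonneg ψ t)

/-- Closed form of the iterates of an `SU(2)` matrix with rows `(A, B)` and `(-B̄, Ā)`. -/
lemma su_two_iterate {A B α β : ℂ} {θ : ℝ} (hAB : normSq A + normSq B = 1)
    (hcos : Real.cos θ = A.re) (hsin : Real.sin θ ≠ 0) {f g : ℕ → ℂ} (hf0 : f 0 = α)
    (hg0 : g 0 = β) (hf : ∀ s, f (s + 1) = A * f s + B * g s)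
    (hg : ∀ s, g (s + 1) = -starRingEnd ℂ B * f s + starRingEnd ℂ A * g s) (s : ℕ) :
    f s = Real.cos (s * θ) * α + Real.sin (s * θ) * ((I * A.im * α + B * β) / Real.sin θ) ∧
    g s = Real.cos (s * θ) * β +
      Real.sin (s * θ) * ((-starRingEnd ℂ B * α - I * A.im * β) / Real.sin θ) := by
  have hS : (Real.sin θ : ℂ) ≠ 0 := ofReal_ne_zero.2 hsin
  have hA : A = Real.cos θ + I * A.im := by rw [hcos, mul_comm I, re_add_im]
  have hA' : starRingEnd ℂ A = Real.cos θ - I * A.im := by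
    rw [hA, map_add, map_mul, conj_ofReal, conj_I, conj_ofReal, ← hA]; ring
  have hy : (A.im : ℂ) ^ 2 + starRingEnd ℂ B * B = (Real.sin θ : ℂ) ^ 2 := by
    rw [← normSq_eq_conj_mul_self]
    have h1 := Real.sin_sq_add_cos_sq θ
    rw [normSq_apply] at hAB
    have : A.im ^ 2 + normSq B = Real.sin θ ^ 2 := by rw [hcos] at h1; nlinarith
    exact_mod_cast this
  generalize A.im = y at *
  induction s with
  | zero => simp [hf0, hg0]
  | succ s ih =>
    have hc : (Real.cos ((s + 1 : ℕ) * θ) : ℂ) =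
        Real.cos (s * θ) * Real.cos θ - Real.sin (s * θ) * Real.sin θ := by
      rw [Nat.cast_succ, add_mul, one_mul, Real.cos_add]; push_cast; rfl
    have hs : (Real.sin ((s + 1 : ℕ) * θ) : ℂ) =
        Real.sin (s * θ) * Real.cos θ + Real.cos (s * θ) * Real.sin θ := by
      rw [Nat.cast_succ, add_mul, one_mul, Real.sin_add]; push_cast; rfl
    rw [hf, hg, ih.1, ih.2, hc, hs, hA', hA]
    generalize (Real.cos (s * θ) : ℂ) = c at *
    generalize (Real.sin (s * θ) : ℂ) = σ at *
    generalize (Real.sin θ : ℂ) = S at *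
    generalize (Real.cos θ : ℂ) = C at *
    have hI := I_sq
    constructor
    · field_simp
      linear_combination (-(σ * α)) * hy + σ * α * y ^ 2 * hI
    · field_simp
      linear_combination (-(σ * β)) * hy + σ * β * y ^ 2 * hI

/-- Limit of the overlap of two nearby vectors rotating at rates `θ k` and `θ (k - ε)`. -/
lemma tendsto_rotating_overlap {α β : ℂ} (hαβ : normSq α + normSq β = 1) {θ : ℝ → ℝ}
    {u w : ℝ → ℂ} {k θ' η : ℝ} (hθ : HasDerivAt θ θ' k) (hu : ContinuousAt u k)
    (hw : ContinuousAt w k) (huw : starRingEnd ℂ (u k) * u k + starRingEnd ℂ (w k) * w k = 1)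
    (hanti : starRingEnd ℂ (u k) * α + starRingEnd ℂ (w k) * β =
      -(starRingEnd ℂ α * u k + starRingEnd ℂ β * w k))
    {s : ℕ → ℕ} {ε : ℕ → ℝ} (hε : Tendsto ε atTop (nhds 0))
    (hsε : Tendsto (fun t => (s t : ℝ) * ε t) atTop (nhds η)) :
    Tendsto (fun t =>
      starRingEnd ℂ (Real.cos (s t * θ k) * α + Real.sin (s t * θ k) * u k) *
        (Real.cos (s t * θ (k - ε t)) * α + Real.sin (s t * θ (k - ε t)) * u (k - ε t)) +
      starRingEnd ℂ (Real.cos (s t * θ k) * β + Real.sin (s t * θ k) * w k) *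
        (Real.cos (s t * θ (k - ε t)) * β + Real.sin (s t * θ (k - ε t)) * w (k - ε t)))
      atTop (nhds (Real.cos (η * θ') -
        Real.sin (η * θ') * (starRingEnd ℂ α * u k + starRingEnd ℂ β * w k))) := by
  have hk : Tendsto (fun t => k - ε t) atTop (nhds k) := by
    simpa using tendsto_const_nhds.sub hε
  have hΔ : Tendsto (fun t => (s t : ℝ) * (θ (k - ε t) - θ k)) atTop (nhds (-(η * θ'))) := by
    have := hθ.hasFDerivAt.hasFDerivWithinAt (s := Set.univ) |>.lim (c := fun t => (s t : ℝ))
      (d := fun t => -ε t) (v := -η) (l := atTop) (by simpa using hε.neg) (by simp)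
      (by simpa using hsε.neg)
    simpa [sub_eq_add_neg] using this
  set Q := starRingEnd ℂ α * u k + starRingEnd ℂ β * w k with hQ
  have hmain : Tendsto (fun t => (Real.cos ((s t : ℝ) * (θ (k - ε t) - θ k)) : ℂ) +
      Real.sin ((s t : ℝ) * (θ (k - ε t) - θ k)) * Q) atTop
      (nhds (Real.cos (η * θ') - Real.sin (η * θ') * Q)) := by
    have hc := (continuous_ofReal.tendsto _).comp ((Real.continuous_cos.tendsto _).comp hΔ)
    have hs := (continuous_ofReal.tendsto _).comp ((Real.continuous_sin.tendsto _).comp hΔ)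
    convert! hc.add (hs.mul_const Q) using 2
    simp [sub_eq_add_neg]
  have hdu : Tendsto (fun t => u (k - ε t) - u k) atTop (nhds 0) := by
    simpa using (hu.tendsto.comp hk).sub_const (u k)
  have hdw : Tendsto (fun t => w (k - ε t) - w k) atTop (nhds 0) := by
    simpa using (hw.tendsto.comp hk).sub_const (w k)
  have hbdd : ∀ (x y : ℕ → ℝ) (z : ℕ → ℂ), (∀ t, |x t| ≤ 1) → (∀ t, |y t| ≤ 1) →
      Tendsto z atTop (nhds 0) → Tendsto (fun t => (x t : ℂ) * y t * z t) atTop (nhds 0) := by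
    intro x y z hx hy hz
    refine squeeze_zero_norm (fun t => ?_) (by simpa using hz.norm)
    rw [norm_mul, norm_mul, norm_real, norm_real, Real.norm_eq_abs, Real.norm_eq_abs]
    exact mul_le_of_le_one_left (norm_nonneg _)
      (mul_le_one₀ (hx t) (abs_nonneg _) (hy t))
  have hr1 := hbdd (fun t => Real.cos (s t * θ k)) (fun t => Real.sin (s t * θ (k - ε t)))
    (fun t => starRingEnd ℂ α * (u (k - ε t) - u k) + starRingEnd ℂ β * (w (k - ε t) - w k))
    (fun t => Real.abs_cos_le_one _) (fun t => Real.abs_sin_le_one _)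
    (by simpa using (hdu.const_mul (starRingEnd ℂ α)).add (hdw.const_mul (starRingEnd ℂ β)))
  have hr2 := hbdd (fun t => Real.sin (s t * θ k)) (fun t => Real.sin (s t * θ (k - ε t)))
    (fun t => starRingEnd ℂ (u k) * (u (k - ε t) - u k) +
      starRingEnd ℂ (w k) * (w (k - ε t) - w k))
    (fun t => Real.abs_sin_le_one _) (fun t => Real.abs_sin_le_one _)
    (by simpa using
      (hdu.const_mul (starRingEnd ℂ (u k))).add (hdw.const_mul (starRingEnd ℂ (w k))))
  have hsum := (hmain.add hr1).add hr2
  rw [add_zero, add_zero] at hsum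
  refine hsum.congr fun t => ?_
  have hαβ' : starRingEnd ℂ α * α + starRingEnd ℂ β * β = 1 := by
    rw [← normSq_eq_conj_mul_self, ← normSq_eq_conj_mul_self]
    exact_mod_cast hαβ
  rw [mul_sub (s t : ℝ), Real.cos_sub, Real.sin_sub]
  simp only [map_add, map_mul, conj_ofReal, ofReal_add, ofReal_sub, ofReal_mul]
  generalize (Real.cos ((s t : ℝ) * θ k) : ℂ) = c
  generalize (Real.sin ((s t : ℝ) * θ k) : ℂ) = σ
  generalize (Real.cos ((s t : ℝ) * θ (k - ε t)) : ℂ) = c'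
  generalize (Real.sin ((s t : ℝ) * θ (k - ε t)) : ℂ) = σ'
  linear_combination (c * σ') * hQ - (c * c') * hαβ' - σ * c' * hanti - (σ' * σ) * huw

/-- The coin sequence alternating between two real orthogonal matrices of the same
determinant `Δ`. -/
def alternatingCoin (Δ a₀ b₀ a₁ b₁ : ℝ) : ℕ → Matrix (Fin 2) (Fin 2) ℂ :=
  fun t => if Even t then !![(a₀ : ℂ), (b₀ : ℂ); ((-(Δ * b₀) : ℝ) : ℂ), ((Δ * a₀ : ℝ) : ℂ)]
    else !![(a₁ : ℂ), (b₁ : ℂ); ((-(Δ * b₁) : ℝ) : ℂ), ((Δ * a₁ : ℝ) : ℂ)]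

/-- Upper right entry of the two-step evolution in momentum space. -/
def twoStepOffDiag (Δ a₀ b₀ a₁ b₁ k : ℝ) : ℂ :=
  a₁ * b₀ * exp (I * (2 * k : ℝ)) + Δ * a₀ * b₁

/-- Upper left entry of the two-step evolution in momentum space. -/
def twoStepDiag (Δ a₀ b₀ a₁ b₁ k : ℝ) : ℂ :=
  a₀ * a₁ * exp (I * (2 * k : ℝ)) - Δ * b₀ * b₁

lemma exp_I_mul_ofReal (x : ℝ) : exp (I * x) = Real.cos x + Real.sin x * I := by
  rw [mul_comm, exp_mul_I, ofReal_cos, ofReal_sin]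

lemma twoStepDiag_re (Δ a₀ b₀ a₁ b₁ k : ℝ) :
    (twoStepDiag Δ a₀ b₀ a₁ b₁ k).re = a₀ * a₁ * Real.cos (2 * k) - Δ * b₀ * b₁ := by
  rw [twoStepDiag, exp_I_mul_ofReal]
  simp [-ofReal_cos, -ofReal_sin, -ofReal_mul]

lemma twoStepDiag_im (Δ a₀ b₀ a₁ b₁ k : ℝ) :
    (twoStepDiag Δ a₀ b₀ a₁ b₁ k).im = a₀ * a₁ * Real.sin (2 * k) := by
  rw [twoStepDiag, exp_I_mul_ofReal]
  simp [-ofReal_cos, -ofReal_sin, -ofReal_mul]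

lemma twoStepOffDiag_re (Δ a₀ b₀ a₁ b₁ k : ℝ) :
    (twoStepOffDiag Δ a₀ b₀ a₁ b₁ k).re = a₁ * b₀ * Real.cos (2 * k) + Δ * a₀ * b₁ := by
  rw [twoStepOffDiag, exp_I_mul_ofReal]
  simp [-ofReal_cos, -ofReal_sin, -ofReal_mul]

lemma twoStepOffDiag_im (Δ a₀ b₀ a₁ b₁ k : ℝ) :
    (twoStepOffDiag Δ a₀ b₀ a₁ b₁ k).im = a₁ * b₀ * Real.sin (2 * k) := by
  rw [twoStepOffDiag, exp_I_mul_ofReal]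
  simp [-ofReal_cos, -ofReal_sin, -ofReal_mul]

lemma normSq_twoStep {Δ a₀ b₀ a₁ b₁ : ℝ} (hΔ : Δ ^ 2 = 1) (h₀ : a₀ ^ 2 + b₀ ^ 2 = 1)
    (h₁ : a₁ ^ 2 + b₁ ^ 2 = 1) (k : ℝ) :
    normSq (twoStepDiag Δ a₀ b₀ a₁ b₁ k) + normSq (twoStepOffDiag Δ a₀ b₀ a₁ b₁ k) = 1 := by
  rw [normSq_apply, normSq_apply, twoStepDiag_re, twoStepDiag_im, twoStepOffDiag_re,
    twoStepOffDiag_im]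
  have hcs := Real.sin_sq_add_cos_sq (2 * k)
  generalize Real.sin (2 * k) = s at *
  generalize Real.cos (2 * k) = c at *
  linear_combination (a₀ ^ 2 + b₀ ^ 2) * a₁ ^ 2 * hcs + (a₀ ^ 2 + b₀ ^ 2) * b₁ ^ 2 * hΔ +
    (a₁ ^ 2 + b₁ ^ 2) * h₀ + h₁

section Evolution

variable {Δ a₀ b₀ a₁ b₁ : ℝ} {α β : ℂ} {ψ : ℕ → ℤ → Fin 2 → ℂ}

lemma qwFourier_even_succ_zero (hevol : QWEvolves (alternatingCoin Δ a₀ b₀ a₁ b₁) ψ)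
    (hinit : QWInit α β ψ) {t : ℕ} (ht : Even t) (k : ℝ) :
    qwFourier ψ (t + 1) 0 k = exp (I * k) * (a₀ * qwFourier ψ t 0 k + b₀ * qwFourier ψ t 1 k) := by
  simp [hevol.qwFourier_succ_zero hinit, alternatingCoin, ht]

lemma qwFourier_even_succ_one (hevol : QWEvolves (alternatingCoin Δ a₀ b₀ a₁ b₁) ψ)
    (hinit : QWInit α β ψ) {t : ℕ} (ht : Even t) (k : ℝ) :
    qwFourier ψ (t + 1) 1 k =
      exp (-(I * k)) * (-(Δ * b₀) * qwFourier ψ t 0 k + Δ * a₀ * qwFourier ψ t 1 k) := by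
  simp [hevol.qwFourier_succ_one hinit, alternatingCoin, ht]

lemma qwFourier_odd_succ_zero (hevol : QWEvolves (alternatingCoin Δ a₀ b₀ a₁ b₁) ψ)
    (hinit : QWInit α β ψ) {t : ℕ} (ht : ¬Even t) (k : ℝ) :
    qwFourier ψ (t + 1) 0 k = exp (I * k) * (a₁ * qwFourier ψ t 0 k + b₁ * qwFourier ψ t 1 k) := by
  simp [hevol.qwFourier_succ_zero hinit, alternatingCoin, ht]

lemma qwFourier_odd_succ_one (hevol : QWEvolves (alternatingCoin Δ a₀ b₀ a₁ b₁) ψ)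
    (hinit : QWInit α β ψ) {t : ℕ} (ht : ¬Even t) (k : ℝ) :
    qwFourier ψ (t + 1) 1 k =
      exp (-(I * k)) * (-(Δ * b₁) * qwFourier ψ t 0 k + Δ * a₁ * qwFourier ψ t 1 k) := by
  simp [hevol.qwFourier_succ_one hinit, alternatingCoin, ht]

lemma normSq_coin_step {Δ a b : ℝ} (hΔ : Δ ^ 2 = 1) (hab : a ^ 2 + b ^ 2 = 1) (k : ℝ) (z w : ℂ) :
    normSq (exp (I * k) * (a * z + b * w)) + normSq (exp (-(I * k)) * (-(Δ * b) * z + Δ * a * w)) =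
      normSq z + normSq w := by
  have he : normSq (exp (I * k)) = 1 := by
    rw [normSq_eq_norm_sq, norm_exp_I_mul_ofReal, one_pow]
  have he' : normSq (exp (-(I * k))) = 1 := by
    rw [Complex.exp_neg, map_inv₀, he, inv_one]
  rw [normSq_mul, normSq_mul, he, he', one_mul, one_mul]
  simp only [normSq_apply, add_re, add_im, mul_re, mul_im, neg_re, neg_im, ofReal_re, ofReal_im]
  linear_combination (b ^ 2 * (z.re ^ 2 + z.im ^ 2) + a ^ 2 * (w.re ^ 2 + w.im ^ 2)
    - 2 * a * b * (z.re * w.re + z.im * w.im)) * hΔ +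
    (z.re ^ 2 + z.im ^ 2 + w.re ^ 2 + w.im ^ 2) * hab

lemma normSq_qwFourier (hΔ : Δ ^ 2 = 1) (h₀ : a₀ ^ 2 + b₀ ^ 2 = 1) (h₁ : a₁ ^ 2 + b₁ ^ 2 = 1)
    (hαβ : normSq α + normSq β = 1) (hevol : QWEvolves (alternatingCoin Δ a₀ b₀ a₁ b₁) ψ)
    (hinit : QWInit α β ψ) (t : ℕ) (k : ℝ) :
    normSq (qwFourier ψ t 0 k) + normSq (qwFourier ψ t 1 k) = 1 := by
  induction t with
  | zero => rw [qwFourier_zero_zero hinit, qwFourier_zero_one hinit, hαβ]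
  | succ t ih =>
    by_cases ht : Even t
    · rw [qwFourier_even_succ_zero hevol hinit ht, qwFourier_even_succ_one hevol hinit ht,
        normSq_coin_step hΔ h₀, ih]
    · rw [qwFourier_odd_succ_zero hevol hinit ht, qwFourier_odd_succ_one hevol hinit ht,
        normSq_coin_step hΔ h₁, ih]

lemma norm_qwFourier_le_one
    (hnorm : ∀ t k, normSq (qwFourier ψ t 0 k) + normSq (qwFourier ψ t 1 k) = 1)
    (t : ℕ) (i : Fin 2) (k : ℝ) : ‖qwFourier ψ t i k‖ ≤ 1 := by
  have h := hnorm t k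
  rw [normSq_eq_norm_sq, normSq_eq_norm_sq] at h
  fin_cases i <;> simp only [Fin.zero_eta, Fin.mk_one] <;>
    nlinarith [sq_nonneg ‖qwFourier ψ t 0 k‖, sq_nonneg ‖qwFourier ψ t 1 k‖]

lemma norm_qwOverlap_le
    (hnorm : ∀ t k, normSq (qwFourier ψ t 0 k) + normSq (qwFourier ψ t 1 k) = 1)
    (t : ℕ) (ε k : ℝ) : ‖qwOverlap ψ t ε k‖ ≤ 2 := by
  have hle := norm_qwFourier_le_one hnorm
  refine (norm_add_le _ _).trans ?_
  simp only [norm_mul, RCLike.norm_conj]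
  linarith [mul_le_one₀ (hle t 0 k) (norm_nonneg _) (hle t 0 (k - ε)),
    mul_le_one₀ (hle t 1 k) (norm_nonneg _) (hle t 1 (k - ε))]

lemma qwFourier_two_step_zero
    (hevol : QWEvolves (alternatingCoin Δ a₀ b₀ a₁ b₁) ψ) (hinit : QWInit α β ψ) (s : ℕ) (k : ℝ) :
    qwFourier ψ (2 * (s + 1)) 0 k = twoStepDiag Δ a₀ b₀ a₁ b₁ k * qwFourier ψ (2 * s) 0 k +
      twoStepOffDiag Δ a₀ b₀ a₁ b₁ k * qwFourier ψ (2 * s) 1 k := by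
  have he : Even (2 * s) := even_two_mul s
  have ho : ¬Even (2 * s + 1) := by simp
  rw [show 2 * (s + 1) = 2 * s + 1 + 1 by ring, qwFourier_odd_succ_zero hevol hinit ho,
    qwFourier_even_succ_zero hevol hinit he, qwFourier_even_succ_one hevol hinit he,
    twoStepDiag, twoStepOffDiag]
  have h2 : exp (I * (2 * k : ℝ)) = exp (I * k) * exp (I * k) := by
    rw [← Complex.exp_add]; congr 1; push_cast; ring
  have h1 : exp (I * k) * exp (-(I * k)) = 1 := by
    rw [← Complex.exp_add, add_neg_cancel, Complex.exp_zero]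
  rw [h2]
  linear_combination
    (Δ * b₁ * (-b₀ * qwFourier ψ (2 * s) 0 k + a₀ * qwFourier ψ (2 * s) 1 k) : ℂ) * h1

lemma qwFourier_two_step_one (hΔ : Δ ^ 2 = 1)
    (hevol : QWEvolves (alternatingCoin Δ a₀ b₀ a₁ b₁) ψ) (hinit : QWInit α β ψ) (s : ℕ) (k : ℝ) :
    qwFourier ψ (2 * (s + 1)) 1 k =
      -starRingEnd ℂ (twoStepOffDiag Δ a₀ b₀ a₁ b₁ k) * qwFourier ψ (2 * s) 0 k +
      starRingEnd ℂ (twoStepDiag Δ a₀ b₀ a₁ b₁ k) * qwFourier ψ (2 * s) 1 k := by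
  have he : Even (2 * s) := even_two_mul s
  have ho : ¬Even (2 * s + 1) := by simp
  rw [show 2 * (s + 1) = 2 * s + 1 + 1 by ring, qwFourier_odd_succ_one hevol hinit ho,
    qwFourier_even_succ_zero hevol hinit he, qwFourier_even_succ_one hevol hinit he,
    twoStepDiag, twoStepOffDiag]
  have hΔ_sq : (Δ : ℂ) ^ 2 = 1 := by exact_mod_cast hΔ
  have h2 : exp (-(I * (2 * k : ℝ))) = exp (-(I * k)) * exp (-(I * k)) := by
    rw [← Complex.exp_add]; congr 1; push_cast; ring
  have h1 : exp (I * k) * exp (-(I * k)) = 1 := by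
    rw [← Complex.exp_add, add_neg_cancel, Complex.exp_zero]
  simp only [map_add, map_sub, map_mul, conj_ofReal, ← Complex.exp_conj, conj_I]
  rw [neg_mul I, h2]
  generalize exp (-(I * k)) = E at *
  generalize exp (I * k) = E' at *
  linear_combination (-(Δ * b₁) * (a₀ * qwFourier ψ (2 * s) 0 k + b₀ * qwFourier ψ (2 * s) 1 k) : ℂ)
    * h1 + (a₁ * E * E * (-b₀ * qwFourier ψ (2 * s) 0 k + a₀ * qwFourier ψ (2 * s) 1 k) : ℂ) * hΔ_sq

/-- Overlaps at an odd time and at the preceding even time agree up to `O(ε)`. -/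
lemma norm_qwOverlap_sub_le (hΔ : Δ ^ 2 = 1) (h₀ : a₀ ^ 2 + b₀ ^ 2 = 1)
    (hnorm : ∀ t k, normSq (qwFourier ψ t 0 k) + normSq (qwFourier ψ t 1 k) = 1)
    (hevol : QWEvolves (alternatingCoin Δ a₀ b₀ a₁ b₁) ψ) (hinit : QWInit α β ψ)
    (t : ℕ) (ε k : ℝ) :
    ‖qwOverlap ψ t ε k - qwOverlap ψ (2 * (t / 2)) ε k‖ ≤
      ‖1 - exp (I * ε)‖ + ‖1 - exp (-(I * ε))‖ := by
  rcases Nat.even_or_odd' t with ⟨s, rfl | rfl⟩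
  · rw [Nat.mul_div_cancel_left s two_pos, sub_self, norm_zero]
    positivity
  · rw [show (2 * s + 1) / 2 = s by omega]
    have he : Even (2 * s) := even_two_mul s
    have hΔ' : (Δ : ℂ) ^ 2 = 1 := by exact_mod_cast hΔ
    have h₀' : (a₀ : ℂ) ^ 2 + (b₀ : ℂ) ^ 2 = 1 := by exact_mod_cast h₀
    have key : qwOverlap ψ (2 * s + 1) ε k - qwOverlap ψ (2 * s) ε k =
        (1 - exp (I * ε)) * (starRingEnd ℂ (qwFourier ψ (2 * s + 1) 0 k) *
          qwFourier ψ (2 * s + 1) 0 (k - ε)) +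
        (1 - exp (-(I * ε))) * (starRingEnd ℂ (qwFourier ψ (2 * s + 1) 1 k) *
          qwFourier ψ (2 * s + 1) 1 (k - ε)) := by
      simp only [qwOverlap, qwFourier_even_succ_zero hevol hinit he,
        qwFourier_even_succ_one hevol hinit he]
      have h1 : exp (I * ε) * (exp (-(I * k)) * exp (I * (k - ε : ℝ))) = 1 := by
        rw [← Complex.exp_add, ← Complex.exp_add, ← Complex.exp_zero]
        congr 1; push_cast; ring
      have h2 : exp (-(I * ε)) * (exp (I * k) * exp (-(I * (k - ε : ℝ)))) = 1 := by
        rw [← Complex.exp_add, ← Complex.exp_add, ← Complex.exp_zero]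
        congr 1; push_cast; ring
      simp only [map_add, map_neg, map_mul, conj_ofReal, ← Complex.exp_conj, conj_I]
      rw [neg_mul I, neg_neg]
      generalize exp (-(I * k)) = e₁ at *
      generalize exp (I * k) = e₂ at *
      generalize exp (I * (k - ε : ℝ)) = e₃ at *
      generalize exp (-(I * (k - ε : ℝ))) = e₄ at *
      generalize exp (I * ε) = e₅ at *
      generalize exp (-(I * ε)) = e₆ at *
      generalize qwFourier ψ (2 * s) 0 k = x
      generalize qwFourier ψ (2 * s) 1 k = y
      generalize qwFourier ψ (2 * s) 0 (k - ε) = x'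
      generalize qwFourier ψ (2 * s) 1 (k - ε) = y'
      generalize starRingEnd ℂ x = x₀
      generalize starRingEnd ℂ y = y₀
      linear_combination (a₀ * x₀ + b₀ * y₀) * (a₀ * x' + b₀ * y') * h1 +
        Δ ^ 2 * (-b₀ * x₀ + a₀ * y₀) * (-b₀ * x' + a₀ * y') * h2 +
        (-b₀ * x₀ + a₀ * y₀) * (-b₀ * x' + a₀ * y') * hΔ' + (x₀ * x' + y₀ * y') * h₀'
    have hle := norm_qwFourier_le_one hnorm
    rw [key]
    refine (norm_add_le _ _).trans (add_le_add ?_ ?_) <;>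
      rw [norm_mul, norm_mul, RCLike.norm_conj] <;>
      exact mul_le_of_le_one_right (norm_nonneg _)
        (mul_le_one₀ (hle _ _ _) (norm_nonneg _) (hle _ _ _))

end Evolution

section PointwiseLimit

variable {Δ a₀ b₀ a₁ b₁ : ℝ} {α β : ℂ} {ψ : ℕ → ℤ → Fin 2 → ℂ}

/-- Eigenphase of the two-step evolution in momentum space. -/
def twoStepPhase (Δ a₀ b₀ a₁ b₁ k : ℝ) : ℝ :=
  Real.arccos (a₀ * a₁ * Real.cos (2 * k) - Δ * b₀ * b₁)

lemma sin_twoStepPhase (Δ a₀ b₀ a₁ b₁ k : ℝ) : Real.sin (twoStepPhase Δ a₀ b₀ a₁ b₁ k) =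
    Real.sqrt (1 - (a₀ * a₁ * Real.cos (2 * k) - Δ * b₀ * b₁) ^ 2) :=
  Real.sin_arccos _

lemma hasDerivAt_twoStepPhase {k : ℝ}
    (hk : (a₀ * a₁ * Real.cos (2 * k) - Δ * b₀ * b₁) ^ 2 < 1) :
    HasDerivAt (twoStepPhase Δ a₀ b₀ a₁ b₁) (2 * velocity (a₀ * a₁) (Δ * b₀ * b₁) (2 * k)) k := by
  have hlt := abs_lt.1 ((sq_lt_one_iff_abs_lt_one _).1 hk)
  have h1 : HasDerivAt (fun k => a₀ * a₁ * Real.cos (2 * k) - Δ * b₀ * b₁)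
      (a₀ * a₁ * (-Real.sin (2 * k) * 2)) k :=
    (((hasDerivAt_const_mul 2).cos).const_mul _).sub_const _
  convert! (Real.hasDerivAt_arccos hlt.1.ne' hlt.2.ne).comp k h1 using 1
  rw [velocity]
  ring

/-- First component of the normalized generator of the two-step evolution applied to `(α, β)`. -/
def generatorZero (Δ a₀ b₀ a₁ b₁ : ℝ) (α β : ℂ) (k : ℝ) : ℂ :=
  (I * (twoStepDiag Δ a₀ b₀ a₁ b₁ k).im * α + twoStepOffDiag Δ a₀ b₀ a₁ b₁ k * β) /
    Real.sin (twoStepPhase Δ a₀ b₀ a₁ b₁ k)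

/-- Second component of the normalized generator of the two-step evolution applied to `(α, β)`. -/
def generatorOne (Δ a₀ b₀ a₁ b₁ : ℝ) (α β : ℂ) (k : ℝ) : ℂ :=
  (-starRingEnd ℂ (twoStepOffDiag Δ a₀ b₀ a₁ b₁ k) * α -
    I * (twoStepDiag Δ a₀ b₀ a₁ b₁ k).im * β) / Real.sin (twoStepPhase Δ a₀ b₀ a₁ b₁ k)

lemma continuous_twoStepDiag (Δ a₀ b₀ a₁ b₁ : ℝ) : Continuous (twoStepDiag Δ a₀ b₀ a₁ b₁) := by
  unfold twoStepDiag
  fun_prop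

lemma continuous_twoStepOffDiag (Δ a₀ b₀ a₁ b₁ : ℝ) :
    Continuous (twoStepOffDiag Δ a₀ b₀ a₁ b₁) := by
  unfold twoStepOffDiag
  fun_prop

lemma continuous_twoStepPhase (Δ a₀ b₀ a₁ b₁ : ℝ) : Continuous (twoStepPhase Δ a₀ b₀ a₁ b₁) := by
  unfold twoStepPhase
  exact Real.continuous_arccos.comp (by fun_prop)

lemma continuousAt_generatorZero {k : ℝ} (hS : Real.sin (twoStepPhase Δ a₀ b₀ a₁ b₁ k) ≠ 0) :
    ContinuousAt (generatorZero Δ a₀ b₀ a₁ b₁ α β) k := by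
  have h1 := continuous_twoStepDiag Δ a₀ b₀ a₁ b₁
  have h2 := continuous_twoStepOffDiag Δ a₀ b₀ a₁ b₁
  have h3 := continuous_twoStepPhase Δ a₀ b₀ a₁ b₁
  refine ContinuousAt.div ?_ ?_ (ofReal_ne_zero.2 hS)
  · have := continuous_ofReal.comp (continuous_im.comp h1)
    exact Continuous.continuousAt
      (((continuous_const.mul this).mul continuous_const).add (h2.mul continuous_const))
  · exact (continuous_ofReal.comp (Real.continuous_sin.comp h3)).continuousAt

lemma continuousAt_generatorOne {k : ℝ} (hS : Real.sin (twoStepPhase Δ a₀ b₀ a₁ b₁ k) ≠ 0) :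
    ContinuousAt (generatorOne Δ a₀ b₀ a₁ b₁ α β) k := by
  have h1 := continuous_twoStepDiag Δ a₀ b₀ a₁ b₁
  have h2 := continuous_twoStepOffDiag Δ a₀ b₀ a₁ b₁
  have h3 := continuous_twoStepPhase Δ a₀ b₀ a₁ b₁
  refine ContinuousAt.div ?_ ?_ (ofReal_ne_zero.2 hS)
  · have := continuous_ofReal.comp (continuous_im.comp h1)
    exact Continuous.continuousAt (((continuous_conj.comp h2).neg.mul continuous_const).sub
      ((continuous_const.mul this).mul continuous_const))
  · exact (continuous_ofReal.comp (Real.continuous_sin.comp h3)).continuousAt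

/-- The real part of the off-diagonal entry, normalized by the sine of the eigenphase. -/
def offDiagRatio (Δ a₀ b₀ a₁ b₁ k : ℝ) : ℝ :=
  (a₁ * b₀ * Real.cos (2 * k) + Δ * a₀ * b₁) /
    Real.sqrt (1 - (a₀ * a₁ * Real.cos (2 * k) - Δ * b₀ * b₁) ^ 2)

/-- Coefficient of the linear term of the limit density. -/
def drift (a₀ b₀ : ℝ) (α β : ℂ) : ℝ :=
  normSq α - normSq β +
    ((α * starRingEnd ℂ β + starRingEnd ℂ α * β) * (b₀ : ℂ) / (a₀ : ℂ)).re

lemma drift_eq (a₀ b₀ : ℝ) (α β : ℂ) : drift a₀ b₀ α β =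
    normSq α - normSq β + 2 * (starRingEnd ℂ α * β).re * (b₀ / a₀) := by
  have h : (α * starRingEnd ℂ β + starRingEnd ℂ α * β) * (b₀ : ℂ) / (a₀ : ℂ) =
      ((2 * (starRingEnd ℂ α * β).re * (b₀ / a₀) : ℝ) : ℂ) := by
    have : α * starRingEnd ℂ β + starRingEnd ℂ α * β =
        ((2 * (starRingEnd ℂ α * β).re : ℝ) : ℂ) := by
      rw [← Complex.add_conj]
      simp [add_comm]
    rw [this]; push_cast; ring
  rw [drift, h, ofReal_re]

lemma expectation_generator (ha₀ : a₀ ≠ 0) (k : ℝ) :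
    starRingEnd ℂ α * generatorZero Δ a₀ b₀ a₁ b₁ α β k +
      starRingEnd ℂ β * generatorOne Δ a₀ b₀ a₁ b₁ α β k =
    I * ((drift a₀ b₀ α β * velocity (a₀ * a₁) (Δ * b₀ * b₁) (2 * k) +
      2 * (starRingEnd ℂ α * β).im * offDiagRatio Δ a₀ b₀ a₁ b₁ k : ℝ) : ℂ) := by
  rw [generatorZero, generatorOne, mul_div_assoc', mul_div_assoc', ← add_div, velocity,
    offDiagRatio, ← sin_twoStepPhase, twoStepDiag_im, drift_eq, ← twoStepOffDiag_re]
  rw [← mul_div_assoc, ← mul_div_assoc _ _ (Real.sin _), ← add_div, ofReal_div, mul_div_assoc']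
  congr 1
  have hB := twoStepOffDiag_im Δ a₀ b₀ a₁ b₁ k
  generalize twoStepOffDiag Δ a₀ b₀ a₁ b₁ k = B at *
  have hB' : B.im = b₀ / a₀ * (a₀ * a₁ * Real.sin (2 * k)) := by
    rw [hB]; field_simp
  generalize a₀ * a₁ * Real.sin (2 * k) = y at *
  generalize b₀ / a₀ = r at *
  apply Complex.ext
  · simp [normSq_apply]; ring
  · simp [normSq_apply, hB']; ring

lemma generator_norm (hΔ : Δ ^ 2 = 1) (h₀ : a₀ ^ 2 + b₀ ^ 2 = 1) (h₁ : a₁ ^ 2 + b₁ ^ 2 = 1)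
    (hαβ : normSq α + normSq β = 1) {k : ℝ}
    (hS : Real.sin (twoStepPhase Δ a₀ b₀ a₁ b₁ k) ≠ 0)
    (hcos : Real.cos (twoStepPhase Δ a₀ b₀ a₁ b₁ k) = (twoStepDiag Δ a₀ b₀ a₁ b₁ k).re) :
    starRingEnd ℂ (generatorZero Δ a₀ b₀ a₁ b₁ α β k) * generatorZero Δ a₀ b₀ a₁ b₁ α β k +
      starRingEnd ℂ (generatorOne Δ a₀ b₀ a₁ b₁ α β k) *
        generatorOne Δ a₀ b₀ a₁ b₁ α β k = 1 := by
  have hn := normSq_twoStep hΔ h₀ h₁ k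
  have hsc := Real.sin_sq_add_cos_sq (twoStepPhase Δ a₀ b₀ a₁ b₁ k)
  rw [← normSq_eq_conj_mul_self, ← normSq_eq_conj_mul_self, ← ofReal_add, ofReal_eq_one,
    generatorZero, generatorOne, normSq_div, normSq_div, ← add_div, normSq_ofReal,
    div_eq_one_iff_eq (mul_self_ne_zero.2 hS)]
  rw [hcos] at hsc
  generalize twoStepDiag Δ a₀ b₀ a₁ b₁ k = A at *
  generalize twoStepOffDiag Δ a₀ b₀ a₁ b₁ k = B at *
  generalize Real.sin _ = S at *
  simp only [normSq_apply] at *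
  simp
  linear_combination (A.im ^ 2 + B.re ^ 2 + B.im ^ 2) * hαβ + hn - hsc

lemma generator_antihermitian (k : ℝ) :
    starRingEnd ℂ (generatorZero Δ a₀ b₀ a₁ b₁ α β k) * α +
      starRingEnd ℂ (generatorOne Δ a₀ b₀ a₁ b₁ α β k) * β =
    -(starRingEnd ℂ α * generatorZero Δ a₀ b₀ a₁ b₁ α β k +
      starRingEnd ℂ β * generatorOne Δ a₀ b₀ a₁ b₁ α β k) := by
  simp only [generatorZero, generatorOne, map_div₀, map_add, map_sub, map_mul, map_neg, conj_I,
    conj_ofReal, conj_conj]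
  ring

lemma qwFourier_even_time (hΔ : Δ ^ 2 = 1) (h₀ : a₀ ^ 2 + b₀ ^ 2 = 1)
    (h₁ : a₁ ^ 2 + b₁ ^ 2 = 1) (hevol : QWEvolves (alternatingCoin Δ a₀ b₀ a₁ b₁) ψ)
    (hinit : QWInit α β ψ) {k : ℝ} (hS : Real.sin (twoStepPhase Δ a₀ b₀ a₁ b₁ k) ≠ 0)
    (hcos : Real.cos (twoStepPhase Δ a₀ b₀ a₁ b₁ k) = (twoStepDiag Δ a₀ b₀ a₁ b₁ k).re)
    (s : ℕ) :
    qwFourier ψ (2 * s) 0 k = Real.cos (s * twoStepPhase Δ a₀ b₀ a₁ b₁ k) * α +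
      Real.sin (s * twoStepPhase Δ a₀ b₀ a₁ b₁ k) * generatorZero Δ a₀ b₀ a₁ b₁ α β k ∧
    qwFourier ψ (2 * s) 1 k = Real.cos (s * twoStepPhase Δ a₀ b₀ a₁ b₁ k) * β +
      Real.sin (s * twoStepPhase Δ a₀ b₀ a₁ b₁ k) * generatorOne Δ a₀ b₀ a₁ b₁ α β k :=
  su_two_iterate (normSq_twoStep hΔ h₀ h₁ k) hcos hS
    (f := fun s => qwFourier ψ (2 * s) 0 k) (g := fun s => qwFourier ψ (2 * s) 1 k)
    (qwFourier_zero_zero hinit k) (qwFourier_zero_one hinit k)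
    (fun s => qwFourier_two_step_zero hevol hinit s k)
    (fun s => qwFourier_two_step_one hΔ hevol hinit s k) s

lemma tendsto_half_mul_div (ξ : ℝ) :
    Tendsto (fun t : ℕ => ((t / 2 : ℕ) : ℝ) * (ξ / t)) atTop (nhds (ξ / 2)) := by
  have hdiv : Tendsto (fun t : ℕ => ξ / (t : ℝ)) atTop (nhds 0) :=
    tendsto_const_div_atTop_nhds_zero_nat ξ
  have hsmall : Tendsto (fun t : ℕ => ((t % 2 : ℕ) : ℝ) / 2 * (ξ / t)) atTop (nhds 0) := by
    refine squeeze_zero_norm (fun t => ?_) (by simpa only [norm_zero] using hdiv.norm)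
    rw [norm_mul]
    refine mul_le_of_le_one_left (norm_nonneg _) ?_
    have : ((t % 2 : ℕ) : ℝ) ≤ 1 := by exact_mod_cast (by omega : t % 2 ≤ 1)
    rw [Real.norm_of_nonneg (by positivity)]
    linarith
  have := (tendsto_const_nhds (x := ξ / 2)).sub hsmall
  rw [sub_zero] at this
  refine this.congr' ?_
  filter_upwards [eventually_gt_atTop 0] with t ht
  have ht' : (t : ℝ) ≠ 0 := by positivity
  have hsplit : (t : ℝ) = 2 * ((t / 2 : ℕ) : ℝ) + ((t % 2 : ℕ) : ℝ) := by
    exact_mod_cast (Nat.div_add_mod t 2).symm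
  field_simp
  linear_combination ξ * hsplit

/-- Pointwise limit of the overlap. -/
def overlapLimit (Δ a₀ b₀ a₁ b₁ : ℝ) (α β : ℂ) (ξ k : ℝ) : ℂ :=
  Real.cos (ξ * velocity (a₀ * a₁) (Δ * b₀ * b₁) (2 * k)) -
    Real.sin (ξ * velocity (a₀ * a₁) (Δ * b₀ * b₁) (2 * k)) *
      (I * ((drift a₀ b₀ α β * velocity (a₀ * a₁) (Δ * b₀ * b₁) (2 * k) +
        2 * (starRingEnd ℂ α * β).im * offDiagRatio Δ a₀ b₀ a₁ b₁ k : ℝ) : ℂ))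

lemma tendsto_qwOverlap (hΔ : Δ ^ 2 = 1) (h₀ : a₀ ^ 2 + b₀ ^ 2 = 1) (h₁ : a₁ ^ 2 + b₁ ^ 2 = 1)
    (ha₀ : a₀ ≠ 0) (hαβ : normSq α + normSq β = 1)
    (hevol : QWEvolves (alternatingCoin Δ a₀ b₀ a₁ b₁) ψ)
    (hinit : QWInit α β ψ) (ξ : ℝ) {k : ℝ}
    (hk : (a₀ * a₁ * Real.cos (2 * k) - Δ * b₀ * b₁) ^ 2 < 1) :
    Tendsto (fun t : ℕ => qwOverlap ψ t (ξ / t) k) atTop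
      (nhds (overlapLimit Δ a₀ b₀ a₁ b₁ α β ξ k)) := by
  have hnorm := normSq_qwFourier hΔ h₀ h₁ hαβ hevol hinit
  have hε : Tendsto (fun t : ℕ => ξ / (t : ℝ)) atTop (nhds 0) :=
    tendsto_const_div_atTop_nhds_zero_nat ξ
  have hsc : ∀ k', (a₀ * a₁ * Real.cos (2 * k') - Δ * b₀ * b₁) ^ 2 < 1 →
      Real.sin (twoStepPhase Δ a₀ b₀ a₁ b₁ k') ≠ 0 ∧
      Real.cos (twoStepPhase Δ a₀ b₀ a₁ b₁ k') = (twoStepDiag Δ a₀ b₀ a₁ b₁ k').re := by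
    intro k' hk'
    have hlt := abs_lt.1 ((sq_lt_one_iff_abs_lt_one _).1 hk')
    rw [sin_twoStepPhase, twoStepPhase, Real.cos_arccos hlt.1.le hlt.2.le, twoStepDiag_re]
    exact ⟨(Real.sqrt_pos.2 (sub_pos.2 hk')).ne', rfl⟩
  obtain ⟨hS, hcos⟩ := hsc k hk
  have hopen : ∀ᶠ t : ℕ in atTop,
      (a₀ * a₁ * Real.cos (2 * (k - ξ / t)) - Δ * b₀ * b₁) ^ 2 < 1 := by
    have hcont : Continuous fun ε : ℝ =>
        (a₀ * a₁ * Real.cos (2 * (k - ε)) - Δ * b₀ * b₁) ^ 2 := by fun_prop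
    have := (hcont.tendsto 0).comp hε
    rw [sub_zero] at this
    exact this.eventually_lt_const hk
  have heven : Tendsto (fun t : ℕ => qwOverlap ψ (2 * (t / 2)) (ξ / t) k) atTop
      (nhds (overlapLimit Δ a₀ b₀ a₁ b₁ α β ξ k)) := by
    have h := tendsto_rotating_overlap hαβ (hasDerivAt_twoStepPhase hk)
      (continuousAt_generatorZero (α := α) (β := β) hS)
      (continuousAt_generatorOne (α := α) (β := β) hS)
      (generator_norm hΔ h₀ h₁ hαβ hS hcos) (generator_antihermitian k) hε
      (tendsto_half_mul_div ξ)
    rw [expectation_generator ha₀, ← mul_assoc, div_mul_cancel₀ ξ two_ne_zero] at h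
    refine h.congr' ?_
    filter_upwards [hopen] with t ht
    obtain ⟨hS', hcos'⟩ := hsc _ ht
    obtain ⟨e0, e1⟩ := qwFourier_even_time hΔ h₀ h₁ hevol hinit hS hcos (t / 2)
    obtain ⟨e2, e3⟩ := qwFourier_even_time hΔ h₀ h₁ hevol hinit hS' hcos' (t / 2)
    rw [qwOverlap, e0, e1, e2, e3]
  have hdiff : Tendsto (fun t : ℕ => qwOverlap ψ t (ξ / t) k -
      qwOverlap ψ (2 * (t / 2)) (ξ / t) k) atTop (nhds 0) := by
    refine squeeze_zero_norm
      (fun t => norm_qwOverlap_sub_le hΔ h₀ hnorm hevol hinit t (ξ / t) k) ?_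
    have hcont : Continuous fun ε : ℝ => ‖1 - exp (I * ε)‖ + ‖1 - exp (-(I * ε))‖ := by fun_prop
    have := (hcont.tendsto 0).comp hε
    simp only [ofReal_zero, mul_zero, neg_zero, Complex.exp_zero, sub_self, norm_zero,
      add_zero] at this
    exact this
  simpa using hdiff.add heven

end PointwiseLimit

section IntegralLimit

variable {Δ a₀ b₀ a₁ b₁ : ℝ} {α β : ℂ} {ψ : ℕ → ℤ → Fin 2 → ℂ}

lemma abs_mul_add_abs_mul_le_one (hΔ : Δ ^ 2 = 1) (h₀ : a₀ ^ 2 + b₀ ^ 2 = 1)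
    (h₁ : a₁ ^ 2 + b₁ ^ 2 = 1) : |a₀ * a₁| + |Δ * b₀ * b₁| ≤ 1 := by
  have hΔ' : |Δ| = 1 := by rwa [← sq_eq_sq₀ (abs_nonneg _) zero_le_one, sq_abs, one_pow]
  rw [abs_mul, abs_mul, abs_mul, hΔ', one_mul]
  nlinarith [sq_nonneg (|a₀| - |a₁|), sq_nonneg (|b₀| - |b₁|), sq_abs a₀, sq_abs a₁, sq_abs b₀,
    sq_abs b₁]

lemma ae_sin_two_mul_ne_zero : ∀ᵐ k : ℝ, Real.sin (2 * k) ≠ 0 := by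
  have hc : {k : ℝ | Real.sin (2 * k) = 0}.Countable := by
    refine (Set.countable_range fun n : ℤ => (n : ℝ) * Real.pi / 2).mono fun k hk => ?_
    obtain ⟨n, hn⟩ := Real.sin_eq_zero_iff.1 hk
    exact ⟨n, by simp only; linarith⟩
  simpa [ae_iff] using hc.measure_zero volume

lemma ae_phase_sq_lt_one (hΔ : Δ ^ 2 = 1) (h₀ : a₀ ^ 2 + b₀ ^ 2 = 1)
    (h₁ : a₁ ^ 2 + b₁ ^ 2 = 1) (ha₀ : a₀ ≠ 0) (ha₁ : a₁ ≠ 0) :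
    ∀ᵐ k : ℝ, (a₀ * a₁ * Real.cos (2 * k) - Δ * b₀ * b₁) ^ 2 < 1 := by
  filter_upwards [ae_sin_two_mul_ne_zero] with k hk
  rw [sq_lt_one_iff_abs_lt_one]
  have hcos : |Real.cos (2 * k)| < 1 := by
    rw [← sq_lt_one_iff_abs_lt_one]
    nlinarith [Real.sin_sq_add_cos_sq (2 * k), sq_pos_of_ne_zero hk]
  have hp : 0 < |a₀ * a₁| := abs_pos.2 (mul_ne_zero ha₀ ha₁)
  calc _ ≤ |a₀ * a₁ * Real.cos (2 * k)| + |Δ * b₀ * b₁| := abs_sub _ _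
    _ < |a₀ * a₁| + |Δ * b₀ * b₁| := by
      rw [abs_mul (a₀ * a₁)]
      gcongr
      exact mul_lt_of_lt_one_right hp hcos
    _ ≤ 1 := abs_mul_add_abs_mul_le_one hΔ h₀ h₁

lemma abs_offDiagRatio_le_one (hΔ : Δ ^ 2 = 1) (h₀ : a₀ ^ 2 + b₀ ^ 2 = 1)
    (h₁ : a₁ ^ 2 + b₁ ^ 2 = 1) (k : ℝ) : |offDiagRatio Δ a₀ b₀ a₁ b₁ k| ≤ 1 := by
  rw [offDiagRatio, abs_div, abs_of_nonneg (Real.sqrt_nonneg _)]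
  refine div_le_one_of_le₀ (Real.abs_le_sqrt ?_) (Real.sqrt_nonneg _)
  have h := normSq_twoStep hΔ h₀ h₁ k
  rw [normSq_apply, normSq_apply, ← twoStepDiag_re, ← twoStepOffDiag_re] at *
  nlinarith [sq_nonneg (twoStepDiag Δ a₀ b₀ a₁ b₁ k).im,
    sq_nonneg (twoStepOffDiag Δ a₀ b₀ a₁ b₁ k).im]

lemma measurable_offDiagRatio : Measurable (offDiagRatio Δ a₀ b₀ a₁ b₁) := by
  unfold offDiagRatio
  fun_prop

/-- The even observable whose mean is the limit characteristic function. -/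
def evenObservable (C ξ x : ℝ) : ℂ :=
  Real.cos (ξ * x) - I * (C * x * Real.sin (ξ * x) : ℝ)

lemma continuous_evenObservable (C ξ : ℝ) : Continuous (evenObservable C ξ) := by
  unfold evenObservable
  fun_prop

lemma evenObservable_neg (C ξ x : ℝ) : evenObservable C ξ (-x) = evenObservable C ξ x := by
  simp [evenObservable]

lemma overlapLimit_eq (ξ k : ℝ) : overlapLimit Δ a₀ b₀ a₁ b₁ α β ξ k =
    evenObservable (drift a₀ b₀ α β) ξ (velocity (a₀ * a₁) (Δ * b₀ * b₁) (2 * k)) -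
      I * (2 * (starRingEnd ℂ α * β).im * (offDiagRatio Δ a₀ b₀ a₁ b₁ k *
        Real.sin (ξ * velocity (a₀ * a₁) (Δ * b₀ * b₁) (2 * k))) : ℝ) := by
  rw [overlapLimit, evenObservable]
  push_cast
  ring

lemma velocity_two_mul_two_pi_sub (p q k : ℝ) :
    velocity p q (2 * (2 * Real.pi - k)) = -velocity p q (2 * k) := by
  have h : 2 * (2 * Real.pi - k) = -(2 * k) + (2 : ℕ) * (2 * Real.pi) := by push_cast; ring
  rw [velocity, velocity, h, Real.cos_add_nat_mul_two_pi, Real.sin_add_nat_mul_two_pi,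
    Real.cos_neg, Real.sin_neg, mul_neg, neg_div]

lemma offDiagRatio_two_pi_sub (k : ℝ) :
    offDiagRatio Δ a₀ b₀ a₁ b₁ (2 * Real.pi - k) = offDiagRatio Δ a₀ b₀ a₁ b₁ k := by
  have h : 2 * (2 * Real.pi - k) = -(2 * k) + (2 : ℕ) * (2 * Real.pi) := by push_cast; ring
  rw [offDiagRatio, offDiagRatio, h, Real.cos_add_nat_mul_two_pi, Real.cos_neg]

lemma intervalIntegral_eq_zero_of_odd {f : ℝ → ℂ} {c : ℝ} (hf : ∀ x, f (c - x) = -f x) :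
    ∫ x in (0 : ℝ)..c, f x = 0 := by
  have h := intervalIntegral.integral_comp_sub_left f c (a := 0) (b := c)
  simp only [hf, sub_self, sub_zero, intervalIntegral.integral_neg] at h
  linear_combination (-1 / 2 : ℂ) * h

lemma integral_overlapLimit (hΔ : Δ ^ 2 = 1) (h₀ : a₀ ^ 2 + b₀ ^ 2 = 1)
    (h₁ : a₁ ^ 2 + b₁ ^ 2 = 1) (ξ : ℝ) :
    ∫ k in (0 : ℝ)..(2 * Real.pi), overlapLimit Δ a₀ b₀ a₁ b₁ α β ξ k =
      ∫ φ in (0 : ℝ)..(2 * Real.pi),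
        evenObservable (drift a₀ b₀ α β) ξ (velocity (a₀ * a₁) (Δ * b₀ * b₁) φ) := by
  have hpq := abs_mul_add_abs_mul_le_one hΔ h₀ h₁
  have hcont := continuous_evenObservable (drift a₀ b₀ α β) ξ
  have hint := intervalIntegrable_comp_velocity hpq hcont
  have hodd : Measurable fun k => offDiagRatio Δ a₀ b₀ a₁ b₁ k *
      Real.sin (ξ * velocity (a₀ * a₁) (Δ * b₀ * b₁) (2 * k)) :=
    measurable_offDiagRatio.mul (Real.measurable_sin.comp
      (((measurable_velocity _ _).comp (measurable_const_mul 2)).const_mul ξ))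
  have hint' : IntervalIntegrable (fun k =>
      I * (2 * (starRingEnd ℂ α * β).im * (offDiagRatio Δ a₀ b₀ a₁ b₁ k *
        Real.sin (ξ * velocity (a₀ * a₁) (Δ * b₀ * b₁) (2 * k))) : ℝ)) volume 0 (2 * Real.pi) := by
    refine intervalIntegrable_of_measurable_of_norm_le
      (C := |2 * (starRingEnd ℂ α * β).im|)
      (measurable_const.mul (measurable_ofReal.comp (measurable_const.mul hodd))) (fun k => ?_) _ _
    change ‖I * ((2 * (starRingEnd ℂ α * β).im * (offDiagRatio Δ a₀ b₀ a₁ b₁ k *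
      Real.sin (ξ * velocity (a₀ * a₁) (Δ * b₀ * b₁) (2 * k))) : ℝ) : ℂ)‖ ≤ _
    rw [norm_mul, norm_I, one_mul, norm_real, Real.norm_eq_abs, abs_mul,
      abs_mul (offDiagRatio _ _ _ _ _ _)]
    exact mul_le_of_le_one_right (abs_nonneg _) (mul_le_one₀ (abs_offDiagRatio_le_one hΔ h₀ h₁ k)
      (abs_nonneg _) (Real.abs_sin_le_one _))
  have hint₂ : IntervalIntegrable (fun k => evenObservable (drift a₀ b₀ α β) ξ
      (velocity (a₀ * a₁) (Δ * b₀ * b₁) (2 * k))) volume 0 (2 * Real.pi) := by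
    simpa using (hint 0 (2 * (2 * Real.pi))).comp_mul_left (c := 2)
  simp only [overlapLimit_eq]
  rw [intervalIntegral.integral_sub hint₂ hint']
  refine (sub_eq_of_eq_add ?_).trans (integral_comp_two_mul_of_periodic
    (fun φ => congrArg (evenObservable (drift a₀ b₀ α β) ξ) (velocity_periodic _ _ φ)) hint)
  rw [left_eq_add]
  refine intervalIntegral_eq_zero_of_odd fun k => ?_
  rw [velocity_two_mul_two_pi_sub, offDiagRatio_two_pi_sub, mul_neg, Real.sin_neg]
  push_cast
  ring

lemma integral_comp_velocity_coin (hΔ : Δ ^ 2 = 1) (h₀ : a₀ ^ 2 + b₀ ^ 2 = 1)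
    (h₁ : a₁ ^ 2 + b₁ ^ 2 = 1) (ha₀ : a₀ ≠ 0) (ha₁ : a₁ ≠ 0) (hb₀ : b₀ ≠ 0) (hb₁ : b₁ ≠ 0)
    {F : ℝ → ℂ} (hF : Continuous F) (heven : ∀ x, F (-x) = F x) :
    ∫ φ in (0 : ℝ)..(2 * Real.pi), F (velocity (a₀ * a₁) (Δ * b₀ * b₁) φ) =
      2 * ∫ y in (0 : ℝ)..Real.pi, F (konnoParam (min |a₀| |a₁|) y) := by
  have hlt : ∀ {a b : ℝ}, a ^ 2 + b ^ 2 = 1 → b ≠ 0 → |a| < 1 := fun h hb => by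
    rw [← sq_lt_one_iff_abs_lt_one]
    nlinarith [sq_pos_of_ne_zero hb]
  have habs : ∀ {a b : ℝ}, a ^ 2 + b ^ 2 = 1 → |b| = Real.sqrt (1 - |a| ^ 2) := fun {a b} h => by
    rw [← Real.sqrt_sq_eq_abs, sq_abs]
    congr 1
    linarith
  have hΔ' : |Δ| = 1 := by rwa [← sq_eq_sq₀ (abs_nonneg _) zero_le_one, sq_abs, one_pow]
  refine integral_comp_velocity (M := max |a₀| |a₁|) (lt_min (abs_pos.2 ha₀) (abs_pos.2 ha₁))
    min_le_max (max_lt (hlt h₀ hb₀) (hlt h₁ hb₁)) ?_ ?_ hF heven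
  · rw [abs_mul, min_mul_max]
  · rw [abs_mul, abs_mul, hΔ', one_mul, habs h₀, habs h₁]
    rcases le_total |a₀| |a₁| with h | h
    · rw [min_eq_left h, max_eq_right h]
    · rw [min_eq_right h, max_eq_left h, mul_comm]

lemma tendsto_charFun_qwMeasure (hΔ : Δ ^ 2 = 1) (h₀ : a₀ ^ 2 + b₀ ^ 2 = 1)
    (h₁ : a₁ ^ 2 + b₁ ^ 2 = 1) (ha₀ : a₀ ≠ 0) (ha₁ : a₁ ≠ 0) (hb₀ : b₀ ≠ 0) (hb₁ : b₁ ≠ 0)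
    (hαβ : normSq α + normSq β = 1) (hevol : QWEvolves (alternatingCoin Δ a₀ b₀ a₁ b₁) ψ)
    (hinit : QWInit α β ψ) (ξ : ℝ) :
    Tendsto (fun t => charFun (qwMeasure ψ t) ξ) atTop (nhds ((Real.pi : ℂ)⁻¹ *
      ∫ y in (0 : ℝ)..Real.pi, evenObservable (drift a₀ b₀ α β) ξ
        (konnoParam (min |a₀| |a₁|) y))) := by
  have hnorm := normSq_qwFourier hΔ h₀ h₁ hαβ hevol hinit
  have hlim : Tendsto (fun t : ℕ => ∫ k in (0 : ℝ)..(2 * Real.pi), qwOverlap ψ t (ξ / t) k) atTop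
      (nhds (∫ k in (0 : ℝ)..(2 * Real.pi), overlapLimit Δ a₀ b₀ a₁ b₁ α β ξ k)) := by
    refine intervalIntegral.tendsto_integral_filter_of_dominated_convergence (fun _ => 2)
      (Eventually.of_forall fun t =>
        (hevol.continuous_qwOverlap hinit t (ξ / t)).aestronglyMeasurable)
      (Eventually.of_forall fun t => Eventually.of_forall fun k _ =>
        norm_qwOverlap_le hnorm t (ξ / t) k) intervalIntegrable_const ?_
    filter_upwards [ae_phase_sq_lt_one hΔ h₀ h₁ ha₀ ha₁] with k hk _
    exact tendsto_qwOverlap hΔ h₀ h₁ ha₀ hαβ hevol hinit ξ hk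
  simp only [hevol.charFun_qwMeasure hinit]
  convert! hlim.const_mul (2 * Real.pi : ℂ)⁻¹ using 2
  rw [integral_overlapLimit hΔ h₀ h₁, integral_comp_velocity_coin hΔ h₀ h₁ ha₀ ha₁ hb₀ hb₁
    (continuous_evenObservable _ _) (evenObservable_neg _ _), mul_inv]
  ring

end IntegralLimit

section LimitLaw

lemma abs_drift_mul_le_one {a₀ b₀ : ℝ} {α β : ℂ} (h₀ : a₀ ^ 2 + b₀ ^ 2 = 1) (ha₀ : a₀ ≠ 0)
    (hαβ : normSq α + normSq β = 1) : |drift a₀ b₀ α β| * |a₀| ≤ 1 := by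
  have h : drift a₀ b₀ α β * a₀ =
      (normSq α - normSq β) * a₀ + 2 * (starRingEnd ℂ α * β).re * b₀ := by
    rw [drift_eq]
    field_simp
  rw [← abs_mul, h, ← sq_le_one_iff_abs_le_one]
  have hz : (starRingEnd ℂ α * β).re ^ 2 ≤ normSq α * normSq β := by
    rw [← normSq_conj α, ← normSq_mul, normSq_apply]
    nlinarith [sq_nonneg (starRingEnd ℂ α * β).im]
  generalize (starRingEnd ℂ α * β).re = z at *
  have hsum : (normSq α - normSq β) ^ 2 + (2 * z) ^ 2 ≤ 1 := by
    nlinarith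
  generalize normSq α - normSq β = n at *
  calc (n * a₀ + 2 * z * b₀) ^ 2 ≤ (n ^ 2 + (2 * z) ^ 2) * (a₀ ^ 2 + b₀ ^ 2) := by
        nlinarith [sq_nonneg (n * b₀ - 2 * z * a₀)]
    _ ≤ 1 := by rwa [h₀, mul_one]

variable {m C : ℝ}

lemma konnoDensity_nonneg (h0 : 0 < m) (h1 : m < 1) (x : ℝ) : 0 ≤ konnoDensity m x := by
  rw [konnoDensity]
  split_ifs with h
  · have : x ^ 2 ≤ 1 := by
      rw [sq_le_one_iff_abs_le_one]
      rw [abs_of_pos h0] at h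
      linarith
    have := sub_nonneg.2 this
    positivity
  · exact le_rfl

lemma konnoDensity_mul_nonneg (h0 : 0 < m) (h1 : m < 1) (hC : |C| * m ≤ 1) (x : ℝ) :
    0 ≤ konnoDensity m x * (1 - C * x) := by
  by_cases h : |x| < |m|
  · refine mul_nonneg (konnoDensity_nonneg h0 h1 x) (sub_nonneg.2 ((le_abs_self _).trans ?_))
    rw [abs_of_pos h0] at h
    rw [abs_mul]
    exact (mul_le_mul_of_nonneg_left h.le (abs_nonneg C)).trans hC
  · rw [konnoDensity, if_neg h, zero_mul]

lemma integrable_konnoDensity_mul (h0 : 0 < m) (h1 : m < 1) (C : ℝ) :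
    Integrable fun x => konnoDensity m x * (1 - C * x) :=
  integrable_konnoDensity_smul h0 h1 (g := fun x => 1 - C * x) (by fun_prop)

lemma konnoParam_pi_sub (m y : ℝ) : konnoParam m (Real.pi - y) = -konnoParam m y := by
  simp [konnoParam, neg_div]

/-- The law with density `f_K(x; m) (1 - C x)`. -/
def limitLaw (m C : ℝ) : Measure ℝ :=
  volume.withDensity fun x => ENNReal.ofReal (konnoDensity m x * (1 - C * x))

lemma integral_limitLaw {E : Type*} [NormedAddCommGroup E] [NormedSpace ℝ E] (h0 : 0 < m)
    (h1 : m < 1) (hC : |C| * m ≤ 1) (g : ℝ → E) :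
    ∫ x, g x ∂limitLaw m C = ∫ x, (konnoDensity m x * (1 - C * x)) • g x := by
  rw [limitLaw, integral_withDensity_eq_integral_toReal_smul₀
    (integrable_konnoDensity_mul h0 h1 C).aemeasurable.ennreal_ofReal
    (Eventually.of_forall fun _ => ENNReal.ofReal_lt_top)]
  simp only [ENNReal.toReal_ofReal (konnoDensity_mul_nonneg h0 h1 hC _)]

lemma charFun_limitLaw (h0 : 0 < m) (h1 : m < 1) (hC : |C| * m ≤ 1) (ξ : ℝ) :
    charFun (limitLaw m C) ξ = (Real.pi : ℂ)⁻¹ *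
      ∫ y in (0 : ℝ)..Real.pi, evenObservable C ξ (konnoParam m y) := by
  have hparam := continuous_konnoParam h0 h1
  have hsplit : ∀ x : ℝ, (1 - C * x) • exp (ξ * x * I) = evenObservable C ξ x +
      ((I * Real.sin (ξ * x) - (C * x * Real.cos (ξ * x) : ℝ)) : ℂ) := fun x => by
    rw [evenObservable, ← ofReal_mul, exp_mul_I, ← ofReal_cos, ← ofReal_sin, real_smul]
    push_cast
    ring
  have hodd : ∫ y in (0 : ℝ)..Real.pi, (I * Real.sin (ξ * konnoParam m y) -
      (C * konnoParam m y * Real.cos (ξ * konnoParam m y) : ℝ) : ℂ) = 0 := by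
    refine intervalIntegral_eq_zero_of_odd fun y => ?_
    rw [konnoParam_pi_sub, mul_neg, Real.sin_neg, Real.cos_neg]
    push_cast
    ring
  rw [charFun_apply_real, integral_limitLaw h0 h1 hC]
  simp only [mul_smul]
  rw [integral_konnoDensity_smul h0 h1 fun x : ℝ => (1 - C * x) • exp (ξ * x * I)]
  simp only [hsplit]
  rw [intervalIntegral.integral_add, hodd, add_zero, real_smul, ofReal_inv]
  · exact ((continuous_evenObservable C ξ).comp hparam).intervalIntegrable _ _
  · exact Continuous.intervalIntegrable (by fun_prop) _ _

lemma isProbabilityMeasure_limitLaw (h0 : 0 < m) (h1 : m < 1) (hC : |C| * m ≤ 1) :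
    IsProbabilityMeasure (limitLaw m C) := by
  have : IsFiniteMeasure (limitLaw m C) :=
    isFiniteMeasure_withDensity_ofReal (integrable_konnoDensity_mul h0 h1 C).2
  have h := charFun_limitLaw h0 h1 hC 0
  rw [charFun_zero] at h
  have hpi : (Real.pi : ℂ) ≠ 0 := ofReal_ne_zero.2 Real.pi_ne_zero
  simp only [evenObservable, zero_mul, Real.cos_zero, Real.sin_zero, mul_zero, ofReal_zero,
    ofReal_one, sub_zero, intervalIntegral.integral_const, real_smul, mul_one,
    inv_mul_cancel₀ hpi, ofReal_eq_one] at h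
  exact ⟨(ENNReal.toReal_eq_one_iff _).1 h⟩

end LimitLaw

/-- Weak limit of a two-period walk whose coins are orthogonal with common determinant `Δ`. -/
theorem qwWeakLimit_alternatingCoin {Δ a₀ b₀ a₁ b₁ : ℝ} {α β : ℂ} {ψ : ℕ → ℤ → Fin 2 → ℂ}
    (hΔ : Δ ^ 2 = 1) (h₀ : a₀ ^ 2 + b₀ ^ 2 = 1) (h₁ : a₁ ^ 2 + b₁ ^ 2 = 1)
    (ha₀ : a₀ ≠ 0) (ha₁ : a₁ ≠ 0) (hb₀ : b₀ ≠ 0) (hb₁ : b₁ ≠ 0)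
    (hαβ : normSq α + normSq β = 1) (hevol : QWEvolves (alternatingCoin Δ a₀ b₀ a₁ b₁) ψ)
    (hinit : QWInit α β ψ) :
    qwWeakLimit ψ fun x => konnoDensity (min |a₀| |a₁|) x * (1 - drift a₀ b₀ α β * x) := by
  have hm0 : 0 < min |a₀| |a₁| := lt_min (abs_pos.2 ha₀) (abs_pos.2 ha₁)
  have hm1 : min |a₀| |a₁| < 1 := by
    refine (min_le_left _ _).trans_lt ?_
    rw [← sq_lt_one_iff_abs_lt_one]
    nlinarith [sq_pos_of_ne_zero hb₀]
  have hC : |drift a₀ b₀ α β| * min |a₀| |a₁| ≤ 1 :=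
    (mul_le_mul_of_nonneg_left (min_le_left _ _) (abs_nonneg _)).trans
      (abs_drift_mul_le_one h₀ ha₀ hαβ)
  have hnorm := normSq_qwFourier hΔ h₀ h₁ hαβ hevol hinit
  have hprob : ∀ t, IsProbabilityMeasure (qwMeasure ψ t) := fun t =>
    hevol.isProbabilityMeasure_qwMeasure hinit t (hnorm t)
  have hlaw := isProbabilityMeasure_limitLaw hm0 hm1 hC
  have hconv : Tendsto (β := ProbabilityMeasure ℝ) (fun t => ⟨qwMeasure ψ t, hprob t⟩) atTop
      (nhds ⟨limitLaw (min |a₀| |a₁|) (drift a₀ b₀ α β), hlaw⟩) := by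
    refine ProbabilityMeasure.tendsto_of_tendsto_charFun fun ξ => ?_
    have h := tendsto_charFun_qwMeasure hΔ h₀ h₁ ha₀ ha₁ hb₀ hb₁ hαβ hevol hinit ξ
    rw [← charFun_limitLaw hm0 hm1 hC] at h
    exact h
  intro g
  have h := ProbabilityMeasure.tendsto_iff_forall_integral_tendsto.1 hconv g
  simp only [ProbabilityMeasure.coe_mk, integral_limitLaw hm0 hm1 hC, smul_eq_mul] at h
  simpa only [mul_comm (g _)] using h

/-- An orthogonal `2 × 2` matrix has the form `!![a, b; -Δ b, Δ a]` with `Δ = ad - bc = ±1`. -/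
lemma orthogonal_entries {a b c d : ℝ}
    (h : Matrix.transpose (!![a, b; c, d] : Matrix (Fin 2) (Fin 2) ℝ) * !![a, b; c, d] = 1) :
    a ^ 2 + b ^ 2 = 1 ∧ (a * d - b * c) ^ 2 = 1 ∧
      c = -((a * d - b * c) * b) ∧ d = (a * d - b * c) * a := by
  have h' := mul_eq_one_comm.1 h
  have e00 := congrFun (congrFun h 0) 0
  have e01 := congrFun (congrFun h 0) 1
  have e11 := congrFun (congrFun h 1) 1
  have f00 := congrFun (congrFun h' 0) 0
  simp [Matrix.mul_apply, Fin.sum_univ_two] at e00 e01 e11 f00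
  refine ⟨by linarith, ?_, ?_, ?_⟩
  · linear_combination e11 + (b ^ 2 + d ^ 2) * e00 - (a * b + c * d) * e01
  · linear_combination -c * e11 + d * e01
  · linear_combination -d * e00 + c * e01

/-- Two-period QW with orthogonal coins, case `det(H₁H₀) > 0`:
`X_t/t ⇒ Z` with density `f_K(x; a_ξ)·[1 − (|α|²−|β|² + (αβ̄+ᾱβ)b₀/a₀)x]`,
where `|a_ξ| = min{|a₀|, |a₁|}`. -/
theorem two_period_QW_weak_limit_det_pos
    (a₀ b₀ c₀ d₀ a₁ b₁ c₁ d₁ : ℝ)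
    (hne : a₀ ≠ 0 ∧ b₀ ≠ 0 ∧ c₀ ≠ 0 ∧ d₀ ≠ 0 ∧ a₁ ≠ 0 ∧ b₁ ≠ 0 ∧ c₁ ≠ 0 ∧ d₁ ≠ 0)
    (horth₀ : Matrix.transpose (!![a₀, b₀; c₀, d₀] : Matrix (Fin 2) (Fin 2) ℝ) * !![a₀, b₀; c₀, d₀] = 1)
    (horth₁ : Matrix.transpose (!![a₁, b₁; c₁, d₁] : Matrix (Fin 2) (Fin 2) ℝ) * !![a₁, b₁; c₁, d₁] = 1)
    (hdet : 0 < ((!![a₁, b₁; c₁, d₁] : Matrix (Fin 2) (Fin 2) ℝ) * !![a₀, b₀; c₀, d₀]).det)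
    (α β : ℂ) (hαβ : Complex.normSq α + Complex.normSq β = 1)
    (ψ : ℕ → ℤ → Fin 2 → ℂ)
    (hinit : QWInit α β ψ)
    (hevol : QWEvolves
      (fun t => if Even t then !![(a₀ : ℂ), (b₀ : ℂ); (c₀ : ℂ), (d₀ : ℂ)]
                else !![(a₁ : ℂ), (b₁ : ℂ); (c₁ : ℂ), (d₁ : ℂ)]) ψ) :
    qwWeakLimit ψ (fun x =>
      konnoDensity (min |a₀| |a₁|) x *
        (1 - (Complex.normSq α - Complex.normSq β +
          ((α * (starRingEnd ℂ) β + (starRingEnd ℂ) α * β) * (b₀ : ℂ) / (a₀ : ℂ)).re) * x)) := by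
  obtain ⟨ha₀, hb₀, -, -, ha₁, hb₁, -, -⟩ := hne
  obtain ⟨h₀, hΔ₀, hc₀, hd₀⟩ := orthogonal_entries horth₀
  obtain ⟨h₁, hΔ₁, hc₁, hd₁⟩ := orthogonal_entries horth₁
  rw [Matrix.det_mul, Matrix.det_fin_two_of, Matrix.det_fin_two_of] at hdet
  have hΔ : a₁ * d₁ - b₁ * c₁ = a₀ * d₀ - b₀ * c₀ := by
    rcases sq_eq_sq_iff_eq_or_eq_neg.1 (hΔ₁.trans hΔ₀.symm) with h | h
    · exact h
    · rw [h] at hdet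
      nlinarith
  rw [hΔ] at hc₁ hd₁
  generalize a₀ * d₀ - b₀ * c₀ = Δ at *
  subst hc₀ hd₀ hc₁ hd₁
  exact qwWeakLimit_alternatingCoin hΔ₀ h₀ h₁ ha₀ ha₁ hb₀ hb₁ hαβ hevol hinit
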